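/- Let K be a commutative semiring with 0 ≠ 1 that is additively locally finite, and Δ a finite alphabet. A nested word series S : NW(Δ) → K is regular if and only if S is swRMSO(K)-definable. -/

import Mathlib

/-! ### Nested words and weighted nested word automata -/

/-- A nesting relation of width `n` (positions `1,…,n`). -/
def IsNestingRel (n : ℕ) (ν : ℕ → ℕ → Prop) : Prop :=
  (∀ i j, ν i j → 1 ≤ i ∧ i < j ∧ j ≤ n) ∧
  (∀ i j j', ν i j → ν i j' → j = j') ∧
  (∀ i i' j, ν i j → ν i' j → i = i') ∧
  (∀ i j i' j', ν i j → ν i' j' → i < i' → j < i' ∨ j' < j)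

/-- A nested word over `Δ`: a nonempty word together with a nesting relation. -/
structure NestedWord (Δ : Type) : Type where
  word : List Δ
  ne : word ≠ []
  rel : ℕ → ℕ → Prop
  isNest : IsNestingRel word.length rel

namespace NestedWord

variable {Δ : Type} (nw : NestedWord Δ)

/-- The length of the nested word. -/
def len : ℕ := nw.word.length

/-- The letter at (1-based) position `j`. -/
def letter (j : ℕ) : Δ := nw.word.getD (j - 1) (nw.word.head nw.ne)

def IsCall (j : ℕ) : Prop := ∃ i, nw.rel j i
def IsReturn (j : ℕ) : Prop := ∃ i, nw.rel i j
def IsInternal (j : ℕ) : Prop :=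
  1 ≤ j ∧ j ≤ nw.len ∧ ¬ nw.IsCall j ∧ ¬ nw.IsReturn j

/-- The nesting depth of position `k`: the number of arches open at `k`. -/
noncomputable def depth (k : ℕ) : ℕ :=
  Set.ncard {p : ℕ × ℕ | nw.rel p.1 p.2 ∧ p.1 ≤ k ∧ k ≤ p.2}

end NestedWord

/-- Clamp a function on `Fin (n+1)` to a function on `ℕ`. -/
def clampFun {Q : Type} {n : ℕ} (r : Fin (n + 1) → Q) : ℕ → Q :=
  fun k => r ⟨min k n, Nat.lt_succ_of_le (min_le_right _ _)⟩

/-- A weighted nested word automaton over the commutative semiring `K`. -/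
structure WNWA (K Δ : Type) [CommSemiring K] : Type 1 where
  Q : Type
  [fintQ : Fintype Q]
  ι : Q → K
  δcall : Q → Δ → Q → K
  δint : Q → Δ → Q → K
  δret : Q → Q → Δ → Q → K
  κ : Q → K

attribute [instance] WNWA.fintQ

namespace WNWA

variable {K Δ : Type} [CommSemiring K]

open Classical in
/-- The weight contributed by position `j` in a run `ρ`. -/
noncomputable def posWeight (A : WNWA K Δ) (nw : NestedWord Δ) (ρ : ℕ → A.Q) (j : ℕ) : K :=
  if nw.IsCall j then A.δcall (ρ (j - 1)) (nw.letter j) (ρ j)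
  else if h : nw.IsReturn j then
    A.δret (ρ (j - 1)) (ρ (h.choose - 1)) (nw.letter j) (ρ j)
  else A.δint (ρ (j - 1)) (nw.letter j) (ρ j)

/-- The weight of a run. -/
noncomputable def runWeight (A : WNWA K Δ) (nw : NestedWord Δ) (ρ : ℕ → A.Q) : K :=
  ∏ j ∈ Finset.Icc 1 nw.len, A.posWeight nw ρ j

/-- The behavior of a weighted nested word automaton. -/
noncomputable def behavior (A : WNWA K Δ) (nw : NestedWord Δ) : K :=
  ∑ r : Fin (nw.len + 1) → A.Q,
    A.ι (r 0) * A.runWeight nw (clampFun r) * A.κ (r (Fin.last _))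

end WNWA

/-- A nested word series is regular if it is the behavior of some WNWA. -/
def NWRegular {K Δ : Type} [CommSemiring K] (S : NestedWord Δ → K) : Prop :=
  ∃ A : WNWA K Δ, ∀ nw, A.behavior nw = S nw
/-! ### Weighted MSO logic over nested words -/

/-- Weighted MSO formulae over nested words: constants from `K`, atomic formulae
and their negations, closed under `∨`, `∧`, and the four quantifiers. -/
inductive WMSO (K Δ : Type) : Type where
  | const : K → WMSO K Δ
  | eqv : ℕ → ℕ → WMSO K Δ
  | lab : Δ → ℕ → WMSO K Δ
  | lev : ℕ → ℕ → WMSO K Δ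
  | nuv : ℕ → ℕ → WMSO K Δ
  | mem : ℕ → ℕ → WMSO K Δ
  | neq : ℕ → ℕ → WMSO K Δ
  | nlab : Δ → ℕ → WMSO K Δ
  | nle : ℕ → ℕ → WMSO K Δ
  | nnu : ℕ → ℕ → WMSO K Δ
  | nmem : ℕ → ℕ → WMSO K Δ
  | or : WMSO K Δ → WMSO K Δ → WMSO K Δ
  | and : WMSO K Δ → WMSO K Δ → WMSO K Δ
  | exF : ℕ → WMSO K Δ → WMSO K Δ
  | exS : ℕ → WMSO K Δ → WMSO K Δ
  | alF : ℕ → WMSO K Δ → WMSO K Δ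
  | alS : ℕ → WMSO K Δ → WMSO K Δ

namespace WMSO

variable {K Δ : Type} [CommSemiring K]

open Classical in
/-- Weighted semantics: `∨ ↦ +`, `∧ ↦ ·`, `∃ ↦ Σ`, `∀ ↦ Π`. -/
noncomputable def sem (nw : NestedWord Δ) :
    WMSO K Δ → (ℕ → ℕ) → (ℕ → Finset ℕ) → K
  | .const k, _, _ => k
  | .eqv x y, γ1, _ => if γ1 x = γ1 y then 1 else 0
  | .lab a x, γ1, _ => if nw.letter (γ1 x) = a then 1 else 0
  | .lev x y, γ1, _ => if γ1 x ≤ γ1 y then 1 else 0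
  | .nuv x y, γ1, _ => if nw.rel (γ1 x) (γ1 y) then 1 else 0
  | .mem x X, γ1, γ2 => if γ1 x ∈ γ2 X then 1 else 0
  | .neq x y, γ1, _ => if γ1 x = γ1 y then 0 else 1
  | .nlab a x, γ1, _ => if nw.letter (γ1 x) = a then 0 else 1
  | .nle x y, γ1, _ => if γ1 x ≤ γ1 y then 0 else 1
  | .nnu x y, γ1, _ => if nw.rel (γ1 x) (γ1 y) then 0 else 1
  | .nmem x X, γ1, γ2 => if γ1 x ∈ γ2 X then 0 else 1
  | .or φ ψ, γ1, γ2 => sem nw φ γ1 γ2 + sem nw ψ γ1 γ2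
  | .and φ ψ, γ1, γ2 => sem nw φ γ1 γ2 * sem nw ψ γ1 γ2
  | .exF x φ, γ1, γ2 =>
      ∑ i ∈ Finset.Icc 1 nw.len, sem nw φ (Function.update γ1 x i) γ2
  | .exS X φ, γ1, γ2 =>
      ∑ T ∈ (Finset.Icc 1 nw.len).powerset, sem nw φ γ1 (Function.update γ2 X T)
  | .alF x φ, γ1, γ2 =>
      ∏ i ∈ Finset.Icc 1 nw.len, sem nw φ (Function.update γ1 x i) γ2
  | .alS X φ, γ1, γ2 =>
      ∏ T ∈ (Finset.Icc 1 nw.len).powerset, sem nw φ γ1 (Function.update γ2 X T)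

/-- Free first-order variables. -/
def freeF : WMSO K Δ → Finset ℕ
  | .const _ => ∅
  | .eqv x y => {x, y}
  | .lab _ x => {x}
  | .lev x y => {x, y}
  | .nuv x y => {x, y}
  | .mem x _ => {x}
  | .neq x y => {x, y}
  | .nlab _ x => {x}
  | .nle x y => {x, y}
  | .nnu x y => {x, y}
  | .nmem x _ => {x}
  | .or φ ψ => φ.freeF ∪ ψ.freeF
  | .and φ ψ => φ.freeF ∪ ψ.freeF
  | .exF x φ => φ.freeF.erase x
  | .exS _ φ => φ.freeF
  | .alF x φ => φ.freeF.erase x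
  | .alS _ φ => φ.freeF

/-- Free second-order variables. -/
def freeS : WMSO K Δ → Finset ℕ
  | .mem _ X => {X}
  | .nmem _ X => {X}
  | .or φ ψ => φ.freeS ∪ ψ.freeS
  | .and φ ψ => φ.freeS ∪ ψ.freeS
  | .exF _ φ => φ.freeS
  | .alF _ φ => φ.freeS
  | .exS X φ => φ.freeS.erase X
  | .alS X φ => φ.freeS.erase X
  | _ => ∅

/-- Sentences: no free variables. -/
def Sentence (φ : WMSO K Δ) : Prop := φ.freeF = ∅ ∧ φ.freeS = ∅

end WMSO

/-! ### Classical MSO over nested words and syntactically unambiguous formulae -/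

/-- Classical MSO formulae over nested words. -/
inductive MSOF (Δ : Type) : Type where
  | eqv : ℕ → ℕ → MSOF Δ
  | lab : Δ → ℕ → MSOF Δ
  | lev : ℕ → ℕ → MSOF Δ
  | nuv : ℕ → ℕ → MSOF Δ
  | mem : ℕ → ℕ → MSOF Δ
  | not : MSOF Δ → MSOF Δ
  | or : MSOF Δ → MSOF Δ → MSOF Δ
  | and : MSOF Δ → MSOF Δ → MSOF Δ
  | exF : ℕ → MSOF Δ → MSOF Δ
  | exS : ℕ → MSOF Δ → MSOF Δ
  | alF : ℕ → MSOF Δ → MSOF Δ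
  | alS : ℕ → MSOF Δ → MSOF Δ

namespace MSOF

variable {Δ : Type}

/-- Substitution of first-order variable `x` by `y` (capture cannot occur for fresh `y`). -/
def substF (x y : ℕ) : MSOF Δ → MSOF Δ
  | eqv u v => eqv (if u = x then y else u) (if v = x then y else v)
  | lab a u => lab a (if u = x then y else u)
  | lev u v => lev (if u = x then y else u) (if v = x then y else v)
  | nuv u v => nuv (if u = x then y else u) (if v = x then y else v)
  | mem u X => mem (if u = x then y else u) X
  | not φ => not (substF x y φ)
  | or φ ψ => or (substF x y φ) (substF x y ψ)
  | and φ ψ => and (substF x y φ) (substF x y ψ)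
  | exF z φ => if z = x then exF z φ else exF z (substF x y φ)
  | exS Z φ => exS Z (substF x y φ)
  | alF z φ => if z = x then alF z φ else alF z (substF x y φ)
  | alS Z φ => alS Z (substF x y φ)

/-- Substitution of second-order variable `X` by `Y`. -/
def substS (X Y : ℕ) : MSOF Δ → MSOF Δ
  | mem u Z => mem u (if Z = X then Y else Z)
  | not φ => not (substS X Y φ)
  | or φ ψ => or (substS X Y φ) (substS X Y ψ)
  | and φ ψ => and (substS X Y φ) (substS X Y ψ)
  | exF z φ => exF z (substS X Y φ)
  | exS Z φ => if Z = X then exS Z φ else exS Z (substS X Y φ)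
  | alF z φ => alF z (substS X Y φ)
  | alS Z φ => if Z = X then alS Z φ else alS Z (substS X Y φ)
  | φ => φ

/-- Largest first-order variable occurring (free or bound). -/
def maxF : MSOF Δ → ℕ
  | eqv u v => max u v
  | lab _ u => u
  | lev u v => max u v
  | nuv u v => max u v
  | mem u _ => u
  | not φ => φ.maxF
  | or φ ψ => max φ.maxF ψ.maxF
  | and φ ψ => max φ.maxF ψ.maxF
  | exF z φ => max z φ.maxF
  | exS _ φ => φ.maxF
  | alF z φ => max z φ.maxF
  | alS _ φ => φ.maxF

/-- Largest second-order variable occurring (free or bound). -/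
def maxS : MSOF Δ → ℕ
  | mem _ X => X
  | not φ => φ.maxS
  | or φ ψ => max φ.maxS ψ.maxS
  | and φ ψ => max φ.maxS ψ.maxS
  | exF _ φ => φ.maxS
  | exS Z φ => max Z φ.maxS
  | alF _ φ => φ.maxS
  | alS Z φ => max Z φ.maxS
  | _ => 0

end MSOF

/-- The lexicographic (strict) order `Y < X` on sets, used to disambiguate set
quantification: `∃y. y ∈ X ∧ ¬ y ∈ Y ∧ ∀z. (z < y → (z ∈ Y ↔ z ∈ X))`,
where `y` and `z` are the first-order variables `0` and `1`. -/
def lessSet {Δ : Type} (Y X : ℕ) : MSOF Δ :=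
  .exF 0 (.and (.mem 0 X) (.and (.not (.mem 0 Y))
    (.alF 1 (.or (.lev 0 1)
      (.and (.or (.not (.mem 1 Y)) (.mem 1 X)) (.or (.not (.mem 1 X)) (.mem 1 Y)))))))

mutual
  /-- `PlusOf K ψ φ` : `φ = ψ⁺`, the positive syntactically unambiguous weighted
  version of the classical formula `ψ`. -/
  inductive PlusOf (K : Type) {Δ : Type} : MSOF Δ → WMSO K Δ → Prop where
    | eqv : ∀ x y, PlusOf K (.eqv x y) (.eqv x y)
    | lab : ∀ (a : Δ) x, PlusOf K (.lab a x) (.lab a x)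
    | lev : ∀ x y, PlusOf K (.lev x y) (.lev x y)
    | nuv : ∀ x y, PlusOf K (.nuv x y) (.nuv x y)
    | mem : ∀ x X, PlusOf K (.mem x X) (.mem x X)
    | not : ∀ {ψ : MSOF Δ} {χ}, MinusOf K ψ χ → PlusOf K (.not ψ) χ
    | or : ∀ {ψ₁ ψ₂ : MSOF Δ} {a b c}, PlusOf K ψ₁ a → MinusOf K ψ₁ b → PlusOf K ψ₂ c →
        PlusOf K (.or ψ₁ ψ₂) (.or a (.and b c))
    | and : ∀ {ψ₁ ψ₂ : MSOF Δ} {a b}, PlusOf K ψ₁ a → PlusOf K ψ₂ b →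
        PlusOf K (.and ψ₁ ψ₂) (.and a b)
    | exF : ∀ {x : ℕ} {ψ : MSOF Δ} {a χ} (y : ℕ), y = (MSOF.exF x ψ).maxF + 1 →
        PlusOf K ψ a →
        MinusOf K (.and (.not (.lev x y)) (ψ.substF x y)) χ →
        PlusOf K (.exF x ψ) (.exF x (.and a (.alF y χ)))
    | alF : ∀ {x : ℕ} {ψ : MSOF Δ} {a}, PlusOf K ψ a → PlusOf K (.alF x ψ) (.alF x a)
    | exS : ∀ {X : ℕ} {ψ : MSOF Δ} {a χ} (Y : ℕ), Y = (MSOF.exS X ψ).maxS + 1 →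
        PlusOf K ψ a →
        MinusOf K (.and (lessSet Y X) (ψ.substS X Y)) χ →
        PlusOf K (.exS X ψ) (.exS X (.and a (.alS Y χ)))
    | alS : ∀ {X : ℕ} {ψ : MSOF Δ} {a}, PlusOf K ψ a → PlusOf K (.alS X ψ) (.alS X a)

  /-- `MinusOf K ψ φ` : `φ = ψ⁻`. -/
  inductive MinusOf (K : Type) {Δ : Type} : MSOF Δ → WMSO K Δ → Prop where
    | eqv : ∀ x y, MinusOf K (.eqv x y) (.neq x y)
    | lab : ∀ (a : Δ) x, MinusOf K (.lab a x) (.nlab a x)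
    | lev : ∀ x y, MinusOf K (.lev x y) (.nle x y)
    | nuv : ∀ x y, MinusOf K (.nuv x y) (.nnu x y)
    | mem : ∀ x X, MinusOf K (.mem x X) (.nmem x X)
    | not : ∀ {ψ : MSOF Δ} {χ}, PlusOf K ψ χ → MinusOf K (.not ψ) χ
    | or : ∀ {ψ₁ ψ₂ : MSOF Δ} {a b}, MinusOf K ψ₁ a → MinusOf K ψ₂ b →
        MinusOf K (.or ψ₁ ψ₂) (.and a b)
    | and : ∀ {ψ₁ ψ₂ : MSOF Δ} {a b c}, MinusOf K ψ₁ a → PlusOf K ψ₁ b → MinusOf K ψ₂ c →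
        MinusOf K (.and ψ₁ ψ₂) (.or a (.and b c))
    | exF : ∀ {x : ℕ} {ψ : MSOF Δ} {a}, MinusOf K ψ a → MinusOf K (.exF x ψ) (.alF x a)
    | alF : ∀ {x : ℕ} {ψ : MSOF Δ} {a χ} (y : ℕ), y = (MSOF.alF x ψ).maxF + 1 →
        MinusOf K ψ a →
        MinusOf K (.and (.not (.lev x y)) (.not (ψ.substF x y))) χ →
        MinusOf K (.alF x ψ) (.exF x (.and a (.alF y χ)))
    | exS : ∀ {X : ℕ} {ψ : MSOF Δ} {a}, MinusOf K ψ a → MinusOf K (.exS X ψ) (.alS X a)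
    | alS : ∀ {X : ℕ} {ψ : MSOF Δ} {a χ} (Y : ℕ), Y = (MSOF.alS X ψ).maxS + 1 →
        MinusOf K ψ a →
        MinusOf K (.and (lessSet Y X) (.not (ψ.substS X Y))) χ →
        MinusOf K (.alS X ψ) (.exS X (.and a (.alS Y χ)))
end

/-- A weighted formula is syntactically unambiguous if it is of the form `ψ⁺` or
`ψ⁻` for a classical formula `ψ`. -/
def SyntUnamb {K Δ : Type} (φ : WMSO K Δ) : Prop :=
  ∃ ψ : MSOF Δ, PlusOf K ψ φ ∨ MinusOf K ψ φ

/-- Almost unambiguous formulae: the smallest class containing all constants and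
all syntactically unambiguous formulae which is closed under `∧` and `∨`. -/
inductive AUMSO {K Δ : Type} : WMSO K Δ → Prop where
  | const (k : K) : AUMSO (.const k)
  | unamb {φ : WMSO K Δ} : SyntUnamb φ → AUMSO φ
  | and {φ ψ : WMSO K Δ} : AUMSO φ → AUMSO ψ → AUMSO (.and φ ψ)
  | or {φ ψ : WMSO K Δ} : AUMSO φ → AUMSO ψ → AUMSO (.or φ ψ)

/-- Weakly unambiguous formulae: additionally closed under existential quantification. -/
inductive WUMSO {K Δ : Type} : WMSO K Δ → Prop where
  | const (k : K) : WUMSO (.const k)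
  | unamb {φ : WMSO K Δ} : SyntUnamb φ → WUMSO φ
  | and {φ ψ : WMSO K Δ} : WUMSO φ → WUMSO ψ → WUMSO (.and φ ψ)
  | or {φ ψ : WMSO K Δ} : WUMSO φ → WUMSO ψ → WUMSO (.or φ ψ)
  | exF {x : ℕ} {φ : WMSO K Δ} : WUMSO φ → WUMSO (.exF x φ)
  | exS {X : ℕ} {φ : WMSO K Δ} : WUMSO φ → WUMSO (.exS X φ)

/-- Syntactically restricted MSO: every subformula `∀X.ψ` has `ψ` syntactically
unambiguous and every subformula `∀x.ψ` has `ψ` almost unambiguous. -/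
def SRMSO {K Δ : Type} : WMSO K Δ → Prop
  | .or φ ψ => SRMSO φ ∧ SRMSO ψ
  | .and φ ψ => SRMSO φ ∧ SRMSO ψ
  | .exF _ φ => SRMSO φ
  | .exS _ φ => SRMSO φ
  | .alF _ φ => AUMSO φ ∧ SRMSO φ
  | .alS _ φ => SyntUnamb φ ∧ SRMSO φ
  | _ => True

/-- Syntactically weakly restricted MSO. -/
def SWRMSO {K Δ : Type} : WMSO K Δ → Prop
  | .or φ ψ => SWRMSO φ ∧ SWRMSO ψ
  | .and φ ψ => SWRMSO φ ∧ SWRMSO ψ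
  | .exF _ φ => SWRMSO φ
  | .exS _ φ => SWRMSO φ
  | .alF _ φ => WUMSO φ ∧ SWRMSO φ
  | .alS _ φ => SyntUnamb φ ∧ SWRMSO φ
  | _ => True

/-- Formulae without set quantification. -/
def NoSetQuant {K Δ : Type} : WMSO K Δ → Prop
  | .or φ ψ => NoSetQuant φ ∧ NoSetQuant ψ
  | .and φ ψ => NoSetQuant φ ∧ NoSetQuant ψ
  | .exF _ φ => NoSetQuant φ
  | .alF _ φ => NoSetQuant φ
  | .exS _ _ => False
  | .alS _ _ => False
  | _ => True

/-- First-order fragment of `SRMSO`. -/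
def SRFO {K Δ : Type} (φ : WMSO K Δ) : Prop := SRMSO φ ∧ NoSetQuant φ

/-- `∃X₁.…∃Xₘ.ψ` with `ψ ∈ sRFO(K)`. -/
inductive SREMSO {K Δ : Type} : WMSO K Δ → Prop where
  | base {φ : WMSO K Δ} : SRFO φ → SREMSO φ
  | exS {X : ℕ} {φ : WMSO K Δ} : SREMSO φ → SREMSO (.exS X φ)

/-- A nested word series is `Z`-definable if it is the semantics of a sentence in `Z`. -/
def NWDefinable {K Δ : Type} [CommSemiring K] (Z : WMSO K Δ → Prop)
    (S : NestedWord Δ → K) : Prop :=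
  ∃ φ : WMSO K Δ, Z φ ∧ φ.Sentence ∧ ∀ nw γ1 γ2, φ.sem nw γ1 γ2 = S nw
/-- `K` is additively locally finite: every finitely generated submonoid of
`(K,+,0)` is finite. -/
def AddLocallyFinite (K : Type) [CommSemiring K] : Prop :=
  ∀ s : Finset K, ((AddSubmonoid.closure (s : Set K) : AddSubmonoid K) : Set K).Finite

namespace NWA

/-- The three kinds of positions. -/
inductive Kind : Type where
  | call | int | ret

/-- Abstract nesting structure on positions `1..n`. `s k` is the innermost call position open
after `k` positions (or `0`), `back j` is the state index a transition at `j` looks back to. -/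
structure Nst : Type where
  n : ℕ
  kind : ℕ → Kind
  back : ℕ → ℕ
  s : ℕ → ℕ
  back_le : ∀ k, back (k + 1) ≤ k
  s0 : s 0 = 0
  sn : s n = 0
  hinternal : ∀ k < n, kind (k + 1) = .int → s (k + 1) = s k
  hcall : ∀ k < n, kind (k + 1) = .call → s (k + 1) = k + 1
  hret : ∀ k < n, kind (k + 1) = .ret →
    back (k + 1) + 1 = s k ∧ s (k + 1) = s (back (k + 1))
  hback : ∀ k, kind (k + 1) ≠ .ret → back (k + 1) = k

/-- Weighted automata with back pointers. -/
structure WA (K L : Type) : Type 1 where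
  Q : Type
  [fin : Fintype Q]
  ini : Q → K
  tr : Kind → Q → Q → L → Q → K
  fi : Q → K

attribute [instance] WA.fin

/-- Deterministic automata with back pointers. -/
structure DA (L : Type) : Type 1 where
  Q : Type
  [fin : Fintype Q]
  q0 : Q
  step : Kind → Q → Q → L → Q

attribute [instance] DA.fin

variable {K L L' : Type}

/-- weight of a position -/
def WA.wt (A : WA K L) (N : Nst) (l : ℕ → L) (r : ℕ → A.Q) (j : ℕ) : K :=
  A.tr (N.kind j) (r (j - 1)) (r (N.back j)) (l j) (r j)

/-- behaviour -/
def WA.beh [CommSemiring K] (A : WA K L) (N : Nst) (l : ℕ → L) : K :=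
  ∑ r : Fin (N.n + 1) → A.Q,
    A.ini (r 0) * (∏ j ∈ Finset.Icc 1 N.n, A.wt N l (clampFun r) j) * A.fi (r (Fin.last _))

/-- The run of a deterministic automaton. -/
def DA.run (D : DA L) (N : Nst) (l : ℕ → L) : ℕ → D.Q
  | 0 => D.q0
  | k + 1 => D.step (N.kind (k + 1)) (D.run N l k) (D.run N l (N.back (k + 1))) (l (k + 1))
termination_by k => k
decreasing_by
  · omega
  · have := N.back_le k; omega

theorem DA.run_zero (D : DA L) (N : Nst) (l : ℕ → L) : D.run N l 0 = D.q0 := by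
  rw [DA.run]

theorem DA.run_succ (D : DA L) (N : Nst) (l : ℕ → L) (k : ℕ) : D.run N l (k + 1) =
    D.step (N.kind (k + 1)) (D.run N l k) (D.run N l (N.back (k + 1))) (l (k + 1)) := by
  rw [DA.run]

theorem DA.run_unique (D : DA L) (N : Nst) (l : ℕ → L) (m : ℕ) (r : ℕ → D.Q) (h0 : r 0 = D.q0)
    (hs : ∀ k < m, r (k + 1) = D.step (N.kind (k + 1)) (r k) (r (N.back (k + 1))) (l (k + 1))) :
    ∀ k ≤ m, r k = D.run N l k := by
  intro k
  induction k using Nat.strong_induction_on with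
  | _ k ih =>
    intro hk
    cases k with
    | zero => rw [h0, DA.run_zero]
    | succ k =>
      have := N.back_le k
      rw [hs k (by omega), DA.run_succ, ih k (by omega) (by omega), ih _ (by omega) (by omega)]

/-- Recognizable step functions. -/
def Step {T : Type} (F : Nst → (ℕ → L) → T) : Prop :=
  ∃ (D : DA L) (o : D.Q → T), ∀ N l, F N l = o (D.run N l N.n)

/-- Regular series. -/
def Reg [CommSemiring K] (F : Nst → (ℕ → L) → K) : Prop :=
  ∃ A : WA K L, ∀ N l, A.beh N l = F N l

theorem Step.map {T T' : Type} {F : Nst → (ℕ → L) → T} (h : Step F) (g : T → T') :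
    Step (fun N l => g (F N l)) := by
  obtain ⟨D, o, h⟩ := h
  exact ⟨D, fun q => g (o q), fun N l => by beta_reduce; rw [h]⟩

theorem Step.pi {I : Type} [Fintype I] {T : I → Type} {F : ∀ i, Nst → (ℕ → L) → T i}
    (h : ∀ i, Step (F i)) : Step (fun N l => fun i => F i N l) := by
  classical
  choose D o h using h
  let E : DA L := ⟨∀ i, (D i).Q, fun i => (D i).q0, fun k p c a i => (D i).step k (p i) (c i) a⟩
  refine ⟨E, fun q i => o i (q i), fun N l => ?_⟩
  funext i
  beta_reduce
  rw [h]
  congr 1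
  symm
  refine (D i).run_unique N l N.n (fun k => E.run N l k i) ?_ ?_ N.n le_rfl
  · rw [DA.run_zero]
  · intro k _
    rw [DA.run_succ]

theorem Step.pair {T T' : Type} {F : Nst → (ℕ → L) → T} {G : Nst → (ℕ → L) → T'}
    (hF : Step F) (hG : Step G) : Step (fun N l => (F N l, G N l)) := by
  obtain ⟨D, o, hF⟩ := hF
  obtain ⟨E, o', hG⟩ := hG
  let P : DA L :=
    ⟨D.Q × E.Q, (D.q0, E.q0), fun k p c a => (D.step k p.1 c.1 a, E.step k p.2 c.2 a)⟩
  refine ⟨P, fun q => (o q.1, o' q.2), fun N l => ?_⟩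
  beta_reduce
  rw [hF, hG]
  congr 2
  · symm
    refine D.run_unique N l N.n (fun k => (P.run N l k).1) ?_ ?_ N.n le_rfl
    · rw [DA.run_zero]
    · intro k _
      rw [DA.run_succ]
  · symm
    refine E.run_unique N l N.n (fun k => (P.run N l k).2) ?_ ?_ N.n le_rfl
    · rw [DA.run_zero]
    · intro k _
      rw [DA.run_succ]

theorem Step.relabel {T : Type} {F : Nst → (ℕ → L') → T} (h : Step F) (f : L → L') :
    Step (fun N l => F N (fun j => f (l j))) := by
  obtain ⟨D, o, h⟩ := h
  let P : DA L := ⟨D.Q, D.q0, fun k p c a => D.step k p c (f a)⟩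
  refine ⟨P, o, fun N l => ?_⟩
  beta_reduce
  rw [h]
  congr 1
  symm
  refine D.run_unique N _ N.n (fun k => P.run N l k) ?_ ?_ N.n le_rfl
  · rw [DA.run_zero]
  · intro k _
    rw [DA.run_succ]

section
variable [CommSemiring K]

theorem Reg.relabel {F : Nst → (ℕ → L') → K} (h : Reg F) (f : L → L') :
    Reg (fun N l => F N (fun j => f (l j))) := by
  obtain ⟨A, h⟩ := h
  exact ⟨⟨A.Q, A.ini, fun k p c a => A.tr k p c (f a), A.fi⟩, fun N l => by beta_reduce; rw [← h]; rfl⟩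

theorem clampFun_of_le {Q : Type} {n : ℕ} (r : Fin (n + 1) → Q) {k : ℕ} (h : k ≤ n) :
    clampFun r k = r ⟨k, Nat.lt_succ_of_le h⟩ := by
  simp [clampFun, h]

theorem Step.toReg {F : Nst → (ℕ → L) → K} (h : Step F) : Reg F := by
  classical
  obtain ⟨D, o, h⟩ := h
  refine ⟨⟨D.Q, fun q => if q = D.q0 then 1 else 0,
    fun k p c a q => if q = D.step k p c a then 1 else 0, o⟩, fun N l => ?_⟩
  rw [h, WA.beh, Finset.sum_eq_single (fun i : Fin (N.n + 1) => D.run N l i)]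
  · have h1 : ∀ j ∈ Finset.Icc 1 N.n, WA.wt (⟨D.Q, fun q => if q = D.q0 then 1 else 0,
      fun k p c a q => if q = D.step k p c a then 1 else 0, o⟩ : WA K L) N l
        (clampFun (fun i : Fin (N.n + 1) => D.run N l i)) j = 1 := by
      intro j hj
      rw [Finset.mem_Icc] at hj
      obtain ⟨k, rfl⟩ : ∃ k, j = k + 1 := ⟨j - 1, by omega⟩
      have := N.back_le k
      simp only [WA.wt]
      rw [clampFun_of_le _ (by omega), clampFun_of_le _ (by omega), clampFun_of_le _ (by omega)]
      simp [DA.run_succ]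
    rw [Finset.prod_congr rfl h1]
    simp [DA.run_zero]
  · intro r _ hr
    by_contra hne
    apply hr
    have h0 : r 0 = D.q0 := by
      by_contra h0
      exact hne (by simp [h0])
    have hs : ∀ k < N.n, clampFun r (k + 1) = D.step (N.kind (k + 1)) (clampFun r k)
        (clampFun r (N.back (k + 1))) (l (k + 1)) := by
      intro k hk
      by_contra hcon
      apply hne
      rw [Finset.prod_eq_zero (i := k + 1)]
      · simp
      · simp; omega
      · simp [WA.wt, hcon]
    funext i
    have := D.run_unique N l N.n (clampFun r) (by rw [clampFun_of_le _ (by omega)]; exact h0) hs i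
      (by omega)
    rw [← this, clampFun_of_le _ (by omega)]
  · simp

theorem Reg.mul {F G : Nst → (ℕ → L) → K} (hF : Reg F) (hG : Reg G) :
    Reg (fun N l => F N l * G N l) := by
  obtain ⟨A, hA⟩ := hF
  obtain ⟨B, hB⟩ := hG
  refine ⟨⟨A.Q × B.Q, fun q => A.ini q.1 * B.ini q.2,
    fun k p c a q => A.tr k p.1 c.1 a q.1 * B.tr k p.2 c.2 a q.2,
    fun q => A.fi q.1 * B.fi q.2⟩, fun N l => ?_⟩
  beta_reduce
  rw [← hA, ← hB]
  simp only [WA.beh]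
  rw [Finset.sum_mul_sum, ← Finset.sum_product', Finset.univ_product_univ,
    ← (Equiv.arrowProdEquivProdArrow (Fin (N.n + 1)) (fun _ => A.Q) (fun _ => B.Q)).symm.sum_comp]
  refine Finset.sum_congr rfl fun r _ => ?_
  have h1 : ∀ j, WA.wt (⟨A.Q × B.Q, fun q => A.ini q.1 * B.ini q.2,
    fun k p c a q => A.tr k p.1 c.1 a q.1 * B.tr k p.2 c.2 a q.2,
    fun q => A.fi q.1 * B.fi q.2⟩ : WA K L) N l (clampFun (fun i => (r.1 i, r.2 i))) j
     = A.wt N l (clampFun r.1) j * B.wt N l (clampFun r.2) j := fun j => rfl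
  simp only [Equiv.arrowProdEquivProdArrow, Equiv.coe_fn_symm_mk, h1, Finset.prod_mul_distrib]
  ring

/-- The disjoint union of two automata. -/
def WA.sum (A B : WA K L) : WA K L where
  Q := A.Q ⊕ B.Q
  ini := Sum.elim A.ini B.ini
  tr := fun k p c a q => match p, c, q with
    | .inl p, .inl c, .inl q => A.tr k p c a q
    | .inr p, .inr c, .inr q => B.tr k p c a q
    | _, _, _ => 0
  fi := Sum.elim A.fi B.fi

theorem sum_add_sum_elim {α β : Type} [Fintype α] [Fintype β] (f : α → K) (g : β → K) :
    ∑ x, f x + ∑ y, g y = ∑ z : α ⊕ β, Sum.elim f g z := by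
  simp [Fintype.sum_sum_type]

theorem WA.sum_tr_ne (A B : WA K L) (k : Kind) (a : L) (x y z : A.Q ⊕ B.Q)
    (h : x.isLeft ≠ y.isLeft) : (A.sum B).tr k y z a x = 0 := by
  rcases x with x | x <;> rcases y with y | y <;> rcases z with z | z <;>
    first | rfl | exact absurd rfl h

theorem Reg.add {F G : Nst → (ℕ → L) → K} (hF : Reg F) (hG : Reg G) :
    Reg (fun N l => F N l + G N l) := by
  obtain ⟨A, hA⟩ := hF
  obtain ⟨B, hB⟩ := hG
  refine ⟨A.sum B, fun N l => ?_⟩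
  beta_reduce
  rw [← hA, ← hB]
  simp only [WA.beh]
  rw [sum_add_sum_elim]
  symm
  let e : (Fin (N.n + 1) → A.Q) ⊕ (Fin (N.n + 1) → B.Q) → Fin (N.n + 1) → A.Q ⊕ B.Q :=
    fun x i => Sum.elim (fun r => Sum.inl (r i)) (fun r => Sum.inr (r i)) x
  refine Finset.sum_of_injOn e ?_ (fun _ _ => Finset.mem_coe.2 (Finset.mem_univ _)) ?_ ?_
  · intro x _ y _ hxy
    rcases x with x | x <;> rcases y with y | y
    · congr 1
      funext i
      exact Sum.inl.inj (congrFun hxy i)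
    · cases congrFun hxy 0
    · cases congrFun hxy 0
    · congr 1
      funext i
      exact Sum.inr.inj (congrFun hxy i)
  · intro r _ hr
    by_contra hne
    apply hr
    change Fin (N.n + 1) → A.Q ⊕ B.Q at r
    have hs : ∀ k < N.n, (clampFun r (k + 1)).isLeft = (clampFun r k).isLeft := by
      intro k hk
      by_contra hcon
      apply hne
      rw [Finset.prod_eq_zero (i := k + 1)]
      · simp
      · simp; omega
      · exact A.sum_tr_ne B _ _ _ _ _ hcon
    have hall : ∀ k ≤ N.n, (clampFun r k).isLeft = (clampFun r 0).isLeft := by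
      intro k
      induction k with
      | zero => simp
      | succ k ih => intro hk; rw [hs k (by omega), ih (by omega)]
    have hall' : ∀ i, (r i).isLeft = (clampFun r 0).isLeft := by
      intro i
      rw [← hall i (by omega), clampFun_of_le _ (by omega)]
    cases hb : (clampFun r 0).isLeft
    · have : ∀ i, ∃ q, r i = Sum.inr q := by
        intro i
        have := hall' i
        rw [hb] at this
        exact Sum.isRight_iff.1 (by simpa using this)
      choose g hg using this
      exact ⟨Sum.inr g, by simp, funext fun i => (hg i).symm⟩
    · have : ∀ i, ∃ q, r i = Sum.inl q := by
        intro i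
        have := hall' i
        rw [hb] at this
        exact Sum.isLeft_iff.1 this
      choose g hg using this
      exact ⟨Sum.inl g, by simp, funext fun i => (hg i).symm⟩
  · rintro (r | r) _
    · rfl
    · rfl

end

/-- extend a labelling by a default value -/
def ext {B : Type} (d : B) {n : ℕ} (u : Fin n → B) : ℕ → B
  | 0 => d
  | j + 1 => if h : j < n then u ⟨j, h⟩ else d

theorem prod_Icc_fin [CommSemiring K] (n : ℕ) (g : ℕ → K) :
    ∏ j ∈ Finset.Icc 1 n, g j = ∏ i : Fin n, g (i + 1) := by
  rw [← Finset.prod_range (fun i => g (i + 1)), Finset.range_eq_Ico, Finset.prod_Ico_add' g 0 n 1]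
  congr 1

theorem Reg.proj [CommSemiring K] {B : Type} [Fintype B] (d : B) {F : Nst → (ℕ → L') → K} (hF : Reg F)
    (f : L → B → L') :
    Reg (fun N l => ∑ u : Fin N.n → B, F N (fun j => f (l j) (ext d u j))) := by
  classical
  obtain ⟨A, hA⟩ := hF
  refine ⟨⟨A.Q, A.ini, fun k p c a q => ∑ b, A.tr k p c (f a b) q, A.fi⟩, fun N l => ?_⟩
  simp only [← hA, WA.beh]
  rw [Finset.sum_comm]
  refine Finset.sum_congr rfl fun r _ => ?_
  rw [← Finset.sum_mul, ← Finset.mul_sum]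
  congr 2
  simp only [prod_Icc_fin]
  simp only [WA.wt]
  rw [Finset.prod_univ_sum, Fintype.piFinset_univ]
  refine Finset.sum_congr rfl fun u _ => ?_
  refine Finset.prod_congr rfl fun i _ => ?_
  simp [ext]

end NWA

namespace NWA

section
variable {Q R L : Type} [Fintype Q] [CommSemiring R]

/-- Iterated sum over the coordinates `s+1, …, s+m`. -/
def SS (s : ℕ) : ℕ → ((ℕ → Q) → R) → (ℕ → Q) → R
  | 0, f, r => f r
  | m + 1, f, r => SS s m (fun r' => ∑ x, f (Function.update r' (s + m + 1) x)) r

theorem SS_congr (s : ℕ) (m : ℕ) (f g : (ℕ → Q) → R) (r : ℕ → Q)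
    (h : ∀ r', (∀ j ≤ s, r' j = r j) → f r' = g r') : SS s m f r = SS s m g r := by
  induction m generalizing f g with
  | zero => exact h r (fun _ _ => rfl)
  | succ m ih =>
    refine ih _ _ fun r' hr' => Finset.sum_congr rfl fun x _ => h _ fun j hj => ?_
    rw [Function.update_of_ne (by omega), hr' j hj]

theorem SS_mul (s : ℕ) (m : ℕ) (c : R) (f : (ℕ → Q) → R) (r : ℕ → Q) :
    SS s m (fun r' => c * f r') r = c * SS s m f r := by
  induction m generalizing f with
  | zero => rfl
  | succ m ih =>
    simp only [SS, ← Finset.mul_sum]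
    exact ih _

theorem SS_add (s m m' : ℕ) (f : (ℕ → Q) → R) :
    SS s (m + m') f = SS s m (SS (s + m) m' f) := by
  induction m' generalizing f with
  | zero => rfl
  | succ m' ih =>
    funext r
    have : SS s (m + (m' + 1)) f r
      = SS s (m + m') (fun r' => ∑ x, f (Function.update r' (s + (m + m') + 1) x)) r := rfl
    rw [this, ih]
    simp only [SS, add_assoc]

theorem sum_clamp (n : ℕ) (F : (ℕ → Q) → R) (hF : ∀ r r', (∀ j ≤ n, r j = r' j) → F r = F r')
    (r0 : ℕ → Q) :
    ∑ r : Fin (n + 1) → Q, F (clampFun r) = ∑ x, SS 0 n F (Function.update r0 0 x) := by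
  induction n generalizing F with
  | zero =>
    rw [← (Equiv.funUnique (Fin 1) Q).symm.sum_comp]
    refine Finset.sum_congr rfl fun x _ => hF _ _ fun j hj => ?_
    obtain rfl : j = 0 := by omega
    simp [clampFun]
  | succ n ih =>
    rw [← (Fin.snocEquiv (fun _ => Q)).sum_comp, Fintype.sum_prod_type, Finset.sum_comm]
    have h2 := ih (fun r' => ∑ x, F (Function.update r' (n + 1) x)) (by
      intro r r' h
      refine Finset.sum_congr rfl fun x _ => hF _ _ fun j hj => ?_
      by_cases hj' : j = n + 1
      · subst hj'; simp
      · rw [Function.update_of_ne hj', Function.update_of_ne hj', h j (by omega)])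
    simp only [SS, zero_add]
    rw [← h2]
    refine Finset.sum_congr rfl fun r _ => Finset.sum_congr rfl fun x _ => hF _ _ fun j hj => ?_
    rw [clampFun_of_le _ hj]
    by_cases hj' : j = n + 1
    · subst hj'
      simp only [Fin.snocEquiv, Equiv.coe_fn_mk, Function.update_self]
      exact Fin.snoc_last (α := fun _ => Q) x r
    · rw [Function.update_of_ne hj', clampFun_of_le _ (by omega)]
      have : (⟨j, Nat.lt_succ_of_le hj⟩ : Fin (n + 1 + 1)) = Fin.castSucc ⟨j, by omega⟩ := rfl
      rw [this]
      exact Fin.snoc_castSucc (α := fun _ => Q) x r _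

end

section
variable {R L : Type} [CommSemiring R] (A : WA R L) (N : Nst) (l : ℕ → L)

/-- The invariant of the determinization. -/
def Inv (σ m : ℕ) (M : A.Q → A.Q → R) : Prop :=
  ∀ (h : A.Q → R) (r : ℕ → A.Q),
    SS σ m (fun r' => (∏ j ∈ Finset.Ioc σ (σ + m), A.wt N l r' j) * h (r' (σ + m))) r
      = ∑ q, M (r σ) q * h q

variable {A N l}

theorem wt_congr (r r' : ℕ → A.Q) (k : ℕ) (h : ∀ j ≤ k + 1, r j = r' j) :
    A.wt N l r (k + 1) = A.wt N l r' (k + 1) := by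
  have := N.back_le k
  simp only [WA.wt, Nat.add_sub_cancel]
  rw [h k (by omega), h _ le_rfl, h (N.back (k+1)) (by omega)]

theorem prod_wt_congr (σ k : ℕ) (r r' : ℕ → A.Q) (h : ∀ j ≤ k, r j = r' j) :
    ∏ j ∈ Finset.Ioc σ k, A.wt N l r j = ∏ j ∈ Finset.Ioc σ k, A.wt N l r' j := by
  refine Finset.prod_congr rfl fun j hj => ?_
  rw [Finset.mem_Ioc] at hj
  obtain ⟨j, rfl⟩ : ∃ i, j = i + 1 := ⟨j - 1, by omega⟩
  exact wt_congr _ _ _ fun i hi => h i (by omega)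

theorem Inv_step (σ m : ℕ) (r : ℕ → A.Q) (x : A.Q) (h : A.Q → R) :
    (∏ j ∈ Finset.Ioc σ (σ + m + 1), A.wt N l (Function.update r (σ + m + 1) x) j) *
      h (Function.update r (σ + m + 1) x (σ + m + 1)) =
    (∏ j ∈ Finset.Ioc σ (σ + m), A.wt N l r j) *
     (A.tr (N.kind (σ + m + 1)) (r (σ + m)) (r (N.back (σ + m + 1))) (l (σ + m + 1)) x * h x) := by
  have hb := N.back_le (σ + m)
  rw [Finset.prod_Ioc_succ_top (by omega), Function.update_self,
    prod_wt_congr _ _ _ r (fun j hj => Function.update_of_ne (by omega) _ _)]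
  simp only [WA.wt, Nat.add_sub_cancel, Function.update_self]
  rw [Function.update_of_ne (by omega), Function.update_of_ne (by omega), mul_assoc]

theorem Inv_zero [DecidableEq A.Q] (σ : ℕ) : Inv A N l σ 0 (fun p q => if p = q then 1 else 0) := by
  intro h r
  simp [SS]

theorem Inv_int (σ m : ℕ) (M : A.Q → A.Q → R) (hk : N.kind (σ + m + 1) = .int)
    (hM : Inv A N l σ m M) :
    Inv A N l σ (m + 1) (fun p q => ∑ x, M p x * A.tr .int x x (l (σ + m + 1)) q) := by
  intro h r
  have h1 := fun (r' : ℕ → A.Q) (x : A.Q) => Inv_step (N := N) (l := l) σ m r' x h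
  simp only [SS, ← add_assoc]
  simp only [h1, ← Finset.mul_sum]
  have hb := N.hback (σ + m) (by rw [hk]; simp)
  rw [hb, hk]
  rw [hM (fun y => ∑ x, A.tr .int y y (l (σ + m + 1)) x * h x) r]
  simp only [Finset.mul_sum, Finset.sum_mul]
  rw [Finset.sum_comm]
  simp only [mul_assoc]

theorem Inv_call (k : ℕ) (hk : N.kind (k + 1) = .call) :
    Inv A N l k 1 (fun p q => A.tr .call p p (l (k + 1)) q) := by
  intro h r
  have hb := N.hback k (by rw [hk]; simp)
  have h1 := fun x => Inv_step (A := A) (N := N) (l := l) k 0 r x h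
  simp only [add_zero] at h1
  simp only [SS, add_zero, h1]
  simp [hb, hk]

theorem Inv_ret (σ m0 m1 : ℕ) (M0 M1 : A.Q → A.Q → R) (hk : N.kind (σ + m0 + m1 + 1) = .ret)
    (hb : N.back (σ + m0 + m1 + 1) = σ + m0)
    (h0 : Inv A N l σ m0 M0) (h1 : Inv A N l (σ + m0) m1 M1) :
    Inv A N l σ (m0 + m1 + 1)
      (fun p q => ∑ z, M0 p z * ∑ x, M1 z x * A.tr .ret x z (l (σ + m0 + m1 + 1)) q) := by
  intro h r
  have hs := fun (r' : ℕ → A.Q) (x : A.Q) => Inv_step (N := N) (l := l) σ (m0 + m1) r' x h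
  simp only [SS, ← add_assoc] at hs ⊢
  simp only [hs, ← Finset.mul_sum]
  rw [SS_add, hb, hk]
  have key : ∀ r1 : ℕ → A.Q, SS (σ + m0) m1 (fun r' => (∏ j ∈ Finset.Ioc σ (σ + m0 + m1), A.wt N l r' j) *
      ∑ x, A.tr .ret (r' (σ + m0 + m1)) (r' (σ + m0)) (l (σ + m0 + m1 + 1)) x * h x) r1
     = (∏ j ∈ Finset.Ioc σ (σ + m0), A.wt N l r1 j) * 
      (fun z => ∑ y, M1 z y * ∑ x, A.tr .ret y z (l (σ + m0 + m1 + 1)) x * h x) (r1 (σ + m0)) := by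
    intro r1
    beta_reduce
    rw [← h1 (fun y => ∑ x, A.tr .ret y (r1 (σ + m0)) (l (σ + m0 + m1 + 1)) x * h x) r1, ← SS_mul]
    refine SS_congr _ _ _ _ _ fun r' hr' => ?_
    rw [← Finset.prod_Ioc_consecutive _ (show σ ≤ σ + m0 by omega)
      (show σ + m0 ≤ σ + m0 + m1 by omega), prod_wt_congr σ (σ + m0) r' r1 hr', hr' _ le_rfl, mul_assoc]
  rw [show SS (σ + m0) m1 (fun r' => (∏ j ∈ Finset.Ioc σ (σ + m0 + m1), A.wt N l r' j) *
      ∑ x, A.tr .ret (r' (σ + m0 + m1)) (r' (σ + m0)) (l (σ + m0 + m1 + 1)) x * h x) = _ from funext key]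
  rw [h0 (fun z => ∑ y, M1 z y * ∑ x, A.tr .ret y z (l (σ + m0 + m1 + 1)) x * h x)]
  simp only [Finset.mul_sum, Finset.sum_mul]
  symm
  rw [Finset.sum_comm]
  refine Finset.sum_congr rfl fun z _ => ?_
  rw [Finset.sum_comm]
  simp only [mul_assoc]

end

theorem Nst.s_le (N : Nst) : ∀ k ≤ N.n, N.s k ≤ k := by
  intro k
  induction k using Nat.strong_induction_on with
  | _ k ih =>
    intro hk
    cases k with
    | zero => rw [N.s0]
    | succ k =>
      have hb := N.back_le k
      cases hkd : N.kind (k + 1)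
      · rw [N.hcall k (by omega) hkd]
      · rw [N.hinternal k (by omega) hkd]; have := ih k (by omega) (by omega); omega
      · rw [(N.hret k (by omega) hkd).2]; have := ih (N.back (k+1)) (by omega) (by omega); omega

open Classical in
/-- The determinization. -/
noncomputable def WA.det {R L : Type} [CommSemiring R] [Fintype R] (A : WA R L) : DA L where
  Q := A.Q → A.Q → R
  q0 := fun p q => if p = q then 1 else 0
  step := fun k M M0 a => match k with
    | .int => fun p q => ∑ x, M p x * A.tr .int x x a q
    | .call => fun p q => A.tr .call p p a q
    | .ret => fun p q => ∑ z, M0 p z * ∑ x, M z x * A.tr .ret x z a q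

theorem WA.det_inv {R L : Type} [CommSemiring R] [Fintype R] (A : WA R L) (N : Nst) (l : ℕ → L) :
    ∀ k ≤ N.n, Inv A N l (N.s k - 1) (k - (N.s k - 1)) (A.det.run N l k) := by
  classical
  intro k
  induction k using Nat.strong_induction_on with
  | _ k ih =>
    intro hk
    cases k with
    | zero =>
      rw [N.s0, DA.run_zero]
      convert Inv_zero (A := A) (N := N) (l := l) 0
      simp [WA.det]
    | succ k =>
      have hb := N.back_le k
      have hsk := N.s_le k (by omega)
      rw [DA.run_succ]
      cases hkd : N.kind (k + 1)
      · rw [N.hcall k (by omega) hkd]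
        have := Inv_call (A := A) (N := N) (l := l) k hkd
        simpa [WA.det] using this
      · rw [N.hinternal k (by omega) hkd]
        obtain ⟨m, hm⟩ : ∃ m, k = N.s k - 1 + m := ⟨k - (N.s k - 1), by omega⟩
        have h1 := ih k (by omega) (by omega)
        rw [show k - (N.s k - 1) = m by omega] at h1
        have := Inv_int (N.s k - 1) m _ (by rw [← hm]; exact hkd) h1
        rw [show k + 1 - (N.s k - 1) = m + 1 by omega]
        rw [← hm] at this
        exact this
      · have h2 := N.hret k (by omega) hkd
        rw [h2.2]
        have hsb := N.s_le (N.back (k + 1)) (by omega)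
        obtain ⟨σ, hσ⟩ : ∃ σ, σ = N.s (N.back (k+1)) - 1 := ⟨_, rfl⟩
        obtain ⟨m0, hm0⟩ : ∃ m, N.back (k+1) = σ + m := ⟨N.back (k+1) - σ, by omega⟩
        obtain ⟨m1, hm1⟩ : ∃ m, k = σ + m0 + m := ⟨k - (σ + m0), by omega⟩
        have i0 := ih (N.back (k+1)) (by omega) (by omega)
        have i1 := ih k (by omega) (by omega)
        rw [← hσ, show N.back (k+1) - σ = m0 by omega] at i0
        rw [show N.s k - 1 = σ + m0 by omega, show k - (σ + m0) = m1 by omega] at i1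
        rw [← hσ, show k + 1 - σ = m0 + m1 + 1 by omega]
        have := Inv_ret σ m0 m1 _ _ (by rw [← hm1]; exact hkd) (by rw [← hm1]; exact hm0) i0 i1
        rw [← hm1] at this
        exact this

theorem WA.det_step {R L : Type} [CommSemiring R] [Fintype R] (A : WA R L) : Step A.beh := by
  refine ⟨A.det, fun M => ∑ p, A.ini p * ∑ q, M p q * A.fi q, fun N l => ?_⟩
  have h := A.det_inv N l N.n le_rfl
  rw [N.sn] at h
  simp only [zero_tsub, tsub_zero] at h
  rcases isEmpty_or_nonempty A.Q with he | ⟨⟨x0⟩⟩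
  · simp [WA.beh]
  · have := sum_clamp N.n (fun r : ℕ → A.Q => A.ini (r 0) *
      ((∏ j ∈ Finset.Ioc 0 N.n, A.wt N l r j) * A.fi (r N.n))) (by
        intro r r' hr
        beta_reduce
        rw [hr 0 (by omega), hr _ le_rfl, prod_wt_congr 0 _ r r' hr]) (fun _ => x0)
    have e : A.beh N l = ∑ r : Fin (N.n + 1) → A.Q, A.ini (clampFun r 0) *
      ((∏ j ∈ Finset.Ioc 0 N.n, A.wt N l (clampFun r) j) * A.fi (clampFun r N.n)) := by
      refine Finset.sum_congr rfl fun r _ => ?_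
      rw [mul_assoc, clampFun_of_le _ (by omega), clampFun_of_le _ le_rfl]
      rfl
    rw [e, this]
    refine Finset.sum_congr rfl fun p _ => ?_
    have h3 := h A.fi (Function.update (fun _ => x0) 0 p)
    simp only [zero_add, Function.update_self] at h3
    rw [← h3, ← SS_mul]
    refine SS_congr _ _ _ _ _ fun r' hr' => ?_
    rw [hr' 0 le_rfl, Function.update_self]

theorem Reg.toStep {R L : Type} [CommSemiring R] [Fintype R] {F : Nst → (ℕ → L) → R} (h : Reg F) :
    Step F := by
  obtain ⟨A, h⟩ := h
  obtain ⟨D, o, h'⟩ := A.det_step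
  exact ⟨D, o, fun N l => by rw [← h, h']⟩

end NWA

namespace NWA

theorem Step.of_run {L Q T : Type} [Fintype Q] (q0 : Q) (stp : Kind → Q → Q → L → Q)
    (r : Nst → (ℕ → L) → ℕ → Q) (h0 : ∀ N l, r N l 0 = q0)
    (hs : ∀ N l k, k < N.n → r N l (k + 1) =
      stp (N.kind (k + 1)) (r N l k) (r N l (N.back (k + 1))) (l (k + 1))) (o : Q → T) :
    Step (fun N l => o (r N l N.n)) := by
  let D : DA L := ⟨Q, q0, stp⟩
  refine ⟨D, o, fun N l => ?_⟩
  beta_reduce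
  rw [D.run_unique N l N.n (r N l) (h0 N l) (hs N l) N.n le_rfl]

theorem Step.const {L T : Type} (t : T) : Step (fun (_ : Nst) (_ : ℕ → L) => t) :=
  ⟨⟨Unit, (), fun _ _ _ _ => ()⟩, fun _ => t, fun _ _ => rfl⟩

theorem Step.map₂ {L T T' T'' : Type} {F : Nst → (ℕ → L) → T} {G : Nst → (ℕ → L) → T'}
    (hF : Step F) (hG : Step G) (g : T → T' → T'') : Step (fun N l => g (F N l) (G N l)) :=
  (hF.pair hG).map (fun p => g p.1 p.2)

theorem Step.exPos {L : Type} (P : L → Prop) :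
    Step (fun N (l : ℕ → L) => ∃ j ∈ Finset.Icc 1 N.n, P (l j)) := by
  refine Step.of_run (Q := Prop) False (fun _ p _ a => p ∨ P a)
    (fun N l k => ∃ j ∈ Finset.Icc 1 k, P (l j)) ?_ ?_ id
  · simp
  · intro N l k _
    simp only [eq_iff_iff, Finset.mem_Icc]
    constructor
    · rintro ⟨j, hj, h⟩
      by_cases hjk : j = k + 1
      · subst hjk; exact Or.inr h
      · exact Or.inl ⟨j, by omega, h⟩
    · rintro (⟨j, hj, h⟩ | h)
      · exact ⟨j, by omega, h⟩
      · exact ⟨k + 1, by omega, h⟩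

theorem Step.exPos2 {L : Type} (P P' : L → Prop) :
    Step (fun N (l : ℕ → L) => ∃ j ∈ Finset.Icc 1 N.n, ∃ i ∈ Finset.Icc 1 N.n,
      i < j ∧ P (l i) ∧ P' (l j)) := by
  refine Step.of_run (Q := Prop × Prop) (False, False) (fun _ p _ a => (p.1 ∨ P a, p.2 ∨ (p.1 ∧ P' a)))
    (fun N l k => (∃ j ∈ Finset.Icc 1 k, P (l j), ∃ j ∈ Finset.Icc 1 k, ∃ i ∈ Finset.Icc 1 k,
      i < j ∧ P (l i) ∧ P' (l j))) ?_ ?_ Prod.snd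
  · simp
  · intro N l k _
    simp only [Prod.mk.injEq, eq_iff_iff, Finset.mem_Icc]
    constructor
    · constructor
      · rintro ⟨j, hj, h⟩
        by_cases hjk : j = k + 1
        · subst hjk; exact Or.inr h
        · exact Or.inl ⟨j, by omega, h⟩
      · rintro (⟨j, hj, h⟩ | h)
        · exact ⟨j, by omega, h⟩
        · exact ⟨k + 1, by omega, h⟩
    · constructor
      · rintro ⟨j, hj, i, hi, hij, h, h'⟩
        by_cases hjk : j = k + 1
        · subst hjk; exact Or.inr ⟨⟨i, by omega, h⟩, h'⟩
        · exact Or.inl ⟨j, by omega, i, by omega, hij, h, h'⟩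
      · rintro (⟨j, hj, i, hi, hij, h, h'⟩ | ⟨⟨i, hi, h⟩, h'⟩)
        · exact ⟨j, by omega, i, by omega, hij, h, h'⟩
        · exact ⟨k + 1, by omega, i, by omega, by omega, h, h'⟩

theorem Step.exRet {L : Type} (P P' : L → Prop) :
    Step (fun N (l : ℕ → L) => ∃ j ∈ Finset.Icc 1 N.n, N.kind j = .ret ∧
      P (l (N.back j + 1)) ∧ P' (l j)) := by
  refine Step.of_run (Q := Prop × Prop) (False, False) (fun kd p c a => 
      (match kd with | .call => P a | .int => p.1 | .ret => c.1, p.2 ∨ (kd = .ret ∧ p.1 ∧ P' a)))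
    (fun N l k => (N.s k ≠ 0 ∧ P (l (N.s k)), ∃ j ∈ Finset.Icc 1 k, N.kind j = .ret ∧
      P (l (N.back j + 1)) ∧ P' (l j))) ?_ ?_ Prod.snd
  · intro N l; simp [N.s0]
  · intro N l k hk
    have hcur : N.kind (k + 1) = .ret → (N.s k ≠ 0 ∧ P (l (N.s k)) ↔ P (l (N.back (k + 1) + 1))) := by
      intro h
      have := (N.hret k hk h).1
      rw [this]
      simp only [ne_eq, and_iff_right_iff_imp]
      intro _; omega
    simp only [Prod.mk.injEq, eq_iff_iff, Finset.mem_Icc]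
    constructor
    · cases hkd : N.kind (k + 1)
      · simp [N.hcall k hk hkd]
      · simp [N.hinternal k hk hkd]
      · simp [(N.hret k hk hkd).2]
    · constructor
      · rintro ⟨j, hj, h, h', h''⟩
        by_cases hjk : j = k + 1
        · subst hjk
          exact Or.inr ⟨h, (hcur h).2 h', h''⟩
        · exact Or.inl ⟨j, by omega, h, h', h''⟩
      · rintro (⟨j, hj, h⟩ | ⟨h, h', h''⟩)
        · exact ⟨j, by omega, h⟩
        · exact ⟨k + 1, by omega, h, (hcur h).1 h', h''⟩

/-- The label function marks exactly one position. -/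
def Sing (n : ℕ) (l : ℕ → Prop) : Prop := ∃ i ∈ Finset.Icc 1 n, ∀ j ∈ Finset.Icc 1 n, l j ↔ j = i

theorem Step.sing : Step (fun N (l : ℕ → Prop) => Sing N.n l) := by
  have h := (Step.exPos (L := Prop) id).map₂ (Step.exPos2 (L := Prop) id id) (fun a b => a ∧ ¬ b)
  convert h using 3 with N l
  simp only [Sing, id, Finset.mem_Icc, eq_iff_iff]
  constructor
  · rintro ⟨i, hi, h⟩
    refine ⟨⟨i, hi, (h i hi).2 rfl⟩, ?_⟩
    rintro ⟨j, hj, j', hj', hlt, h1, h2⟩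
    rw [h _ hj] at h2
    rw [h _ hj'] at h1
    omega
  · rintro ⟨⟨i, hi, hli⟩, h⟩
    refine ⟨i, hi, fun j hj => ⟨fun hlj => ?_, fun e => e ▸ hli⟩⟩
    by_contra hne
    rcases lt_or_gt_of_ne hne with hlt | hlt
    · exact h ⟨i, hi, j, hj, hlt, hlj, hli⟩
    · exact h ⟨j, hj, i, hi, hlt, hli, hlj⟩

/-! ### Projections -/

/-- The Boolean semiring. -/
inductive BB : Type where
  | f | t
  deriving DecidableEq

instance : Fintype BB := ⟨{.f, .t}, by intro x; cases x <;> simp⟩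

instance : Zero BB := ⟨.f⟩

instance : Add BB := ⟨fun a b => match a, b with | .f, .f => .f | _, _ => .t⟩

instance : CommSemiring BB where
  mul a b := match a, b with | .t, .t => .t | _, _ => .f
  one := .t
  add_assoc := by decide
  zero_add := by decide
  add_zero := by decide
  add_comm := by decide
  mul_assoc := by decide
  one_mul := by decide
  mul_one := by decide
  mul_comm := by decide
  zero_mul := by decide
  mul_zero := by decide
  left_distrib := by decide
  right_distrib := by decide
  nsmul := nsmulRec

theorem BB.add_eq : ∀ a b : BB, a + b = .t ↔ a = .t ∨ b = .t := by decide

theorem BB.sum_eq {I : Type} (s : Finset I) (g : I → BB) : ∑ i ∈ s, g i = .t ↔ ∃ i ∈ s, g i = .t := by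
  classical
  induction s using Finset.induction_on with
  | empty => simp only [Finset.sum_empty]; constructor
             · intro h; cases h
             · simp
  | insert a s ha ih => rw [Finset.sum_insert ha, BB.add_eq, ih]; simp

theorem Step.projP {L L' B : Type} [Fintype B] (d : B) {F : Nst → (ℕ → L') → Prop}
    (hF : Step F) (f : L → B → L') :
    Step (fun N l => ∃ u : Fin N.n → B, F N (fun j => f (l j) (ext d u j))) := by
  classical
  have h := ((Reg.proj d (hF.map (fun p => if p then BB.t else BB.f)).toReg f).toStep).map (fun b => b = .t)
  convert h using 3 with N l
  rw [BB.sum_eq]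
  simp

section K
variable {K L L' : Type} [CommSemiring K]

theorem finite_rangeS (hK : AddLocallyFinite K) : Finite (Nat.castRingHom K).rangeS := by
  have := hK {1}
  refine Set.Finite.subset this ?_
  rintro _ ⟨n, rfl⟩
  induction n with
  | zero => simp
  | succ n ih =>
    simp only [Nat.coe_castRingHom, Nat.cast_succ] at ih ⊢
    exact AddSubmonoid.add_mem _ ih (AddSubmonoid.subset_closure (by simp))

theorem Step.proj (hK : AddLocallyFinite K) {B : Type} [Fintype B] (d : B) {F : Nst → (ℕ → L') → K}
    (hF : Step F) (f : L → B → L') :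
    Step (fun N l => ∑ u : Fin N.n → B, F N (fun j => f (l j) (ext d u j))) := by
  classical
  have := finite_rangeS hK
  have : Fintype (Nat.castRingHom K).rangeS := Fintype.ofFinite _
  obtain ⟨D, o, hF⟩ := hF
  have h1 : ∀ q : D.Q, Step (fun N l => ∑ u : Fin N.n → B,
      (if D.run N (fun j => f (l j) (ext d u j)) N.n = q then (1 : (Nat.castRingHom K).rangeS) else 0)) := by
    intro q
    have : Step (fun N l => (if D.run N l N.n = q then (1 : (Nat.castRingHom K).rangeS) else 0)) :=
      ⟨D, fun q' => if q' = q then 1 else 0, fun N l => rfl⟩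
    exact (Reg.proj d this.toReg f).toStep
  have h2 := (Step.pi h1).map (fun c => ∑ q, o q * (c q : K))
  convert h2 using 3 with N l
  simp only [hF, AddSubmonoidClass.coe_finsetSum, Finset.mul_sum]
  rw [Finset.sum_comm]
  refine Finset.sum_congr rfl fun u _ => ?_
  rw [Finset.sum_eq_single (D.run N (fun j => f (l j) (ext d u j)) N.n)]
  · simp
  · intro b _ hb
    rw [if_neg (Ne.symm hb)]
    simp
  · simp

end K

/-! ### Marking -/

theorem ext_mark (n i : ℕ) (hi : i ∈ Finset.Icc 1 n) :
    ext False (fun j : Fin n => (j : ℕ) + 1 = i) = fun j => j = i := by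
  rw [Finset.mem_Icc] at hi
  funext j
  cases j with
  | zero => simp [ext]; omega
  | succ j =>
    simp only [ext]
    split_ifs with h
    · rfl
    · simp; omega

theorem ext_set (n : ℕ) (T : Finset ℕ) (hT : T ⊆ Finset.Icc 1 n) :
    ext False (fun j : Fin n => (j : ℕ) + 1 ∈ T) = fun j => j ∈ T := by
  funext j
  cases j with
  | zero => simp only [ext, eq_iff_iff, false_iff]; intro h; simpa using hT h
  | succ j =>
    simp only [ext]
    split_ifs with h
    · rfl
    · simp only [eq_iff_iff, false_iff]; intro h'; have := hT h'; simp at this; omega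

theorem sing_ext (n : ℕ) (u : Fin n → Prop) : Sing n (ext False u) ↔
    ∃ i ∈ Finset.Icc 1 n, u = fun j : Fin n => (j : ℕ) + 1 = i := by
  unfold Sing
  refine exists_congr fun i => and_congr_right fun hi => ?_
  constructor
  · intro h
    funext j
    have := h (j + 1) (by simp)
    simpa [ext] using this
  · rintro rfl j _
    rw [ext_mark n i hi]

theorem ext_eq_set (n : ℕ) (u : Fin n → Prop) : ∃ T ⊆ Finset.Icc 1 n,
    u = fun j : Fin n => (j : ℕ) + 1 ∈ T := by
  classical
  refine ⟨(Finset.Icc 1 n).filter (ext False u), Finset.filter_subset _ _, ?_⟩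
  funext j
  simp [ext]

open Classical in
theorem sum_mark {K : Type} [CommSemiring K] (n : ℕ) (G : (ℕ → Prop) → K) :
    ∑ u : Fin n → Prop, G (ext False u) * (if Sing n (ext False u) then 1 else 0)
      = ∑ i ∈ Finset.Icc 1 n, G (fun j => j = i) := by
  symm
  refine Finset.sum_of_injOn (fun i (j : Fin n) => (j : ℕ) + 1 = i) ?_ (by simp) ?_ ?_
  · intro i hi i' hi' h
    simp only [Finset.coe_Icc, Set.mem_Icc] at hi
    have := congrFun h ⟨i - 1, by omega⟩
    simp only [eq_iff_iff] at this
    omega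
  · intro u _ hu
    rw [if_neg, mul_zero]
    rw [sing_ext]
    rintro ⟨i, hi, rfl⟩
    exact hu ⟨i, by exact_mod_cast hi, rfl⟩
  · intro i hi
    rw [if_pos ((sing_ext _ _).2 ⟨i, hi, rfl⟩), mul_one, ext_mark n i hi]

theorem sum_set {K : Type} [CommSemiring K] (n : ℕ) (G : (ℕ → Prop) → K) :
    ∑ u : Fin n → Prop, G (ext False u) = ∑ T ∈ (Finset.Icc 1 n).powerset, G (fun j => j ∈ T) := by
  symm
  refine Finset.sum_of_injOn (fun T (j : Fin n) => (j : ℕ) + 1 ∈ T) ?_ (by simp) ?_ ?_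
  · intro T hT T' hT' h
    simp only [Finset.coe_powerset, Set.mem_preimage, Set.mem_powerset_iff, Finset.coe_subset] at hT hT'
    ext j
    by_cases hj : j ∈ Finset.Icc 1 n
    · have := congrFun h ⟨j - 1, by simp at hj; omega⟩
      simp only [eq_iff_iff] at this
      rwa [Nat.sub_add_cancel (by simp at hj; omega)] at this
    · exact ⟨fun h => absurd (hT h) hj, fun h => absurd (hT' h) hj⟩
  · intro u _ hu
    obtain ⟨T, hT, rfl⟩ := ext_eq_set n u
    exact absurd ⟨T, Finset.mem_coe.2 (Finset.mem_powerset.2 hT), rfl⟩ hu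
  · intro T hT
    rw [ext_set n T (by simpa using hT)]

section K
variable {K L L' : Type} [CommSemiring K]

theorem Step.exMark {F : Nst → (ℕ → L') → Prop} (hF : Step F) (f : L → Prop → L') :
    Step (fun N l => ∃ i ∈ Finset.Icc 1 N.n, F N (fun j => f (l j) (j = i))) := by
  have h := Step.projP False (((hF.relabel (Prod.fst : L' × Prop → L')).map₂
    (Step.sing.relabel (Prod.snd : L' × Prop → Prop)) (fun a b => a ∧ b))) (fun a b => (f a b, b))
  convert h using 3 with N l
  constructor
  · rintro ⟨i, hi, h⟩
    exact ⟨fun j : Fin N.n => (j : ℕ) + 1 = i, by rw [ext_mark N.n i hi]; exact h,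
      (sing_ext _ _).2 ⟨i, hi, rfl⟩⟩
  · rintro ⟨u, h, hs⟩
    obtain ⟨i, hi, rfl⟩ := (sing_ext _ _).1 hs
    rw [ext_mark N.n i hi] at h
    exact ⟨i, hi, h⟩

theorem Step.exSet {F : Nst → (ℕ → L') → Prop} (hF : Step F) (f : L → Prop → L') :
    Step (fun N l => ∃ T ∈ (Finset.Icc 1 N.n).powerset, F N (fun j => f (l j) (j ∈ T))) := by
  have h := Step.projP False hF f
  convert h using 3 with N l
  constructor
  · rintro ⟨T, hT, h⟩
    exact ⟨fun j : Fin N.n => (j : ℕ) + 1 ∈ T, by rw [ext_set N.n T (by simpa using hT)]; exact h⟩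
  · rintro ⟨u, h⟩
    obtain ⟨T, hT, rfl⟩ := ext_eq_set N.n u
    rw [ext_set N.n T hT] at h
    exact ⟨T, by simpa using hT, h⟩

theorem Step.sumMark (hK : AddLocallyFinite K) {F : Nst → (ℕ → L') → K} (hF : Step F)
    (f : L → Prop → L') :
    Step (fun N l => ∑ i ∈ Finset.Icc 1 N.n, F N (fun j => f (l j) (j = i))) := by
  classical
  have h := Step.proj hK False (((hF.relabel (Prod.fst : L' × Prop → L')).map₂
    (Step.sing.relabel (Prod.snd : L' × Prop → Prop)) (fun a b => a * if b then 1 else 0)))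
    (fun a b => (f a b, b))
  convert h using 3 with N l
  exact (sum_mark N.n (fun u => F N (fun j => f (l j) (u j)))).symm

theorem Step.sumSet (hK : AddLocallyFinite K) {F : Nst → (ℕ → L') → K} (hF : Step F)
    (f : L → Prop → L') :
    Step (fun N l => ∑ T ∈ (Finset.Icc 1 N.n).powerset, F N (fun j => f (l j) (j ∈ T))) := by
  have h := Step.proj hK False hF f
  convert h using 3 with N l
  exact (sum_set N.n (fun u => F N (fun j => f (l j) (u j)))).symm

theorem Reg.sumMark {F : Nst → (ℕ → L') → K} (hF : Reg F) (f : L → Prop → L') :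
    Reg (fun N l => ∑ i ∈ Finset.Icc 1 N.n, F N (fun j => f (l j) (j = i))) := by
  classical
  have h := Reg.proj False (((hF.relabel (Prod.fst : L' × Prop → L')).mul
    ((Step.sing.relabel (Prod.snd : L' × Prop → Prop)).map
      (fun b => if b then (1 : K) else 0)).toReg))
    (fun a b => (f a b, b))
  convert h using 3 with N l
  exact (sum_mark N.n (fun u => F N (fun j => f (l j) (u j)))).symm

theorem Reg.sumSet {F : Nst → (ℕ → L') → K} (hF : Reg F) (f : L → Prop → L') :
    Reg (fun N l => ∑ T ∈ (Finset.Icc 1 N.n).powerset, F N (fun j => f (l j) (j ∈ T))) := by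
  have h := Reg.proj False hF f
  convert h using 3 with N l
  exact (sum_set N.n (fun u => F N (fun j => f (l j) (u j)))).symm

/-- product of local weights -/
theorem Reg.prodLocal (g : L → K) : Reg (fun N l => ∏ j ∈ Finset.Icc 1 N.n, g (l j)) := by
  refine ⟨⟨Unit, fun _ => 1, fun _ _ _ a _ => g a, fun _ => 1⟩, fun N l => ?_⟩
  simp [WA.beh, WA.wt]

theorem Reg.prodMark {F : Nst → (ℕ → L') → K} (hF : Step F) (f : L → Prop → L') :
    Reg (fun N l => ∏ i ∈ Finset.Icc 1 N.n, F N (fun j => f (l j) (j = i))) := by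
  classical
  obtain ⟨D, o, hF⟩ := hF
  have hrun : Step (fun N (l : ℕ → L') => D.run N l N.n) := ⟨D, id, fun _ _ => rfl⟩
  -- the guessed state at the marked position differs from the state of the run
  have hbad : Step (fun N (l : ℕ → L' × D.Q × Prop) => ∃ q, (∃ j ∈ Finset.Icc 1 N.n, (l j).2.2 ∧ (l j).2.1 = q) ∧
      D.run N (fun j => (l j).1) N.n ≠ q) := by
    have hp := Step.pi (fun q : D.Q => (Step.exPos (fun a : L' × D.Q × Prop => a.2.2 ∧ a.2.1 = q)).map₂
      (hrun.relabel (Prod.fst : L' × D.Q × Prop → L')) (fun a b => a ∧ b ≠ q))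
    exact hp.map (fun c => ∃ q, c q)
  have hgood := (hbad.exMark (fun (a : L × D.Q) (b : Prop) => (f a.1 b, a.2, b))).map
    (fun b => if b then (0 : K) else 1)
  have h := Reg.proj D.q0 (hgood.toReg.mul (Reg.prodLocal (fun a : L × D.Q => o a.2)))
    (fun (a : L) (q : D.Q) => (a, q))
  convert h using 3 with N l
  rw [Finset.sum_eq_single (fun i : Fin N.n => D.run N (fun j => f (l j) (j = (i : ℕ) + 1)) N.n)]
  · rw [if_neg, one_mul]
    · refine Finset.prod_congr rfl fun i hi => ?_
      rw [Finset.mem_Icc] at hi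
      rw [hF]
      obtain ⟨i, rfl⟩ : ∃ k, i = k + 1 := ⟨i - 1, by omega⟩
      simp only [ext]
      rw [dif_pos (by omega)]
    · rintro ⟨i, hi, q, ⟨j, hj, hji, hq⟩, hne⟩
      simp only at hji hq hne
      subst hji
      rw [Finset.mem_Icc] at hi
      obtain ⟨j, rfl⟩ : ∃ k, j = k + 1 := ⟨j - 1, by omega⟩
      simp only [ext] at hq
      rw [dif_pos (by omega)] at hq
      exact hne hq
  · intro v _ hv
    rw [if_pos, zero_mul]
    by_contra hcon
    apply hv
    funext i
    by_contra hne
    refine hcon ⟨i + 1, by simp, v i, ⟨i + 1, by simp, rfl, by simp [ext]⟩, ?_⟩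
    exact fun h => hne h.symm
  · simp

end K

end NWA

namespace NWA

section
variable {Δ : Type}

theorem not_call_ret (nw : NestedWord Δ) {j : ℕ} (hc : nw.IsCall j) (hr : nw.IsReturn j) : False := by
  obtain ⟨k, hk⟩ := hc
  obtain ⟨i, hi⟩ := hr
  obtain ⟨h1, -, -, h4⟩ := nw.isNest
  have := h1 _ _ hk
  have := h1 _ _ hi
  have := h4 _ _ _ _ hi hk (by omega)
  omega

open Classical in
/-- kind of a position -/
noncomputable def nkind (nw : NestedWord Δ) (j : ℕ) : Kind :=
  if nw.IsCall j then .call else if nw.IsReturn j then .ret else .int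

open Classical in
/-- back pointer -/
noncomputable def nback (nw : NestedWord Δ) (j : ℕ) : ℕ :=
  if h : nw.IsReturn j then h.choose - 1 else j - 1

/-- the calls open after `k` positions -/
def nopen (nw : NestedWord Δ) (k : ℕ) : Set ℕ := {i | ∃ j, nw.rel i j ∧ i ≤ k ∧ k < j}

/-- innermost open call -/
noncomputable def nst (nw : NestedWord Δ) (k : ℕ) : ℕ := sSup (nopen nw k)

theorem nback_ret (nw : NestedWord Δ) {i j : ℕ} (h : nw.rel i j) : nback nw j + 1 = i := by
  have hr : nw.IsReturn j := ⟨i, h⟩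
  have h1 := nw.isNest.1 _ _ h
  rw [nback, dif_pos hr, nw.isNest.2.2.1 _ _ _ hr.choose_spec h]
  omega

theorem nkind_ret_iff (nw : NestedWord Δ) (j : ℕ) : nkind nw j = .ret ↔ nw.IsReturn j := by
  unfold nkind
  split_ifs with h1 h2
  · simp only [reduceCtorEq, false_iff]
    exact fun h => not_call_ret nw h1 h
  · simpa
  · simpa

theorem nkind_call_iff (nw : NestedWord Δ) (j : ℕ) : nkind nw j = .call ↔ nw.IsCall j := by
  unfold nkind
  split_ifs with h1 h2
  · simpa
  · simpa
  · simpa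

theorem nkind_int_iff (nw : NestedWord Δ) (j : ℕ) :
    nkind nw j = .int ↔ ¬ nw.IsCall j ∧ ¬ nw.IsReturn j := by
  unfold nkind
  split_ifs with h1 h2
  · simp [h1]
  · simp [h2]
  · simp [h1, h2]

/-- The abstract nesting structure of a nested word. -/
noncomputable def toNst (nw : NestedWord Δ) : Nst where
  n := nw.len
  kind := nkind nw
  back := nback nw
  s := nst nw
  back_le := by
    intro k
    by_cases h : nw.IsReturn (k + 1)
    · obtain ⟨i, hi⟩ := h
      have := nback_ret nw hi
      have := nw.isNest.1 _ _ hi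
      omega
    · rw [nback, dif_neg h]; omega
  s0 := by
    have : nopen nw 0 = ∅ := by
      ext i
      simp only [nopen, Set.mem_setOf_eq, Set.mem_empty_iff_false, iff_false]
      rintro ⟨j, h, h', h''⟩
      have := nw.isNest.1 _ _ h
      omega
    rw [nst, this]
    simp
  sn := by
    have : nopen nw nw.len = ∅ := by
      ext i
      simp only [nopen, Set.mem_setOf_eq, Set.mem_empty_iff_false, iff_false]
      rintro ⟨j, h, h', h''⟩
      have := nw.isNest.1 _ _ h
      simp only [NestedWord.len] at h''
      omega
    rw [nst, this]
    simp
  hinternal := by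
    intro k _ hk
    rw [nkind_int_iff] at hk
    have : nopen nw (k + 1) = nopen nw k := by
      ext i
      simp only [nopen, Set.mem_setOf_eq]
      constructor
      · rintro ⟨j, h, h', h''⟩
        have : i ≠ k + 1 := by rintro rfl; exact hk.1 ⟨_, h⟩
        exact ⟨j, h, by omega, by omega⟩
      · rintro ⟨j, h, h', h''⟩
        have : j ≠ k + 1 := by rintro rfl; exact hk.2 ⟨_, h⟩
        exact ⟨j, h, by omega, by omega⟩
    rw [nst, this, nst]
  hcall := by
    intro k _ hk
    rw [nkind_call_iff] at hk
    obtain ⟨j, hj⟩ := hk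
    refine IsGreatest.csSup_eq ⟨⟨j, hj, le_rfl, (nw.isNest.1 _ _ hj).2.1⟩, ?_⟩
    rintro i ⟨_, _, h, _⟩
    exact h
  hret := by
    intro k _ hk
    rw [nkind_ret_iff] at hk
    obtain ⟨i, hi⟩ := hk
    have hb := nback_ret nw hi
    have hi1 := nw.isNest.1 _ _ hi
    obtain ⟨N1, N2, N3, N4⟩ := nw.isNest
    constructor
    · rw [hb]
      symm
      refine IsGreatest.csSup_eq ⟨⟨k + 1, hi, by omega, by omega⟩, ?_⟩
      rintro i' ⟨j', h, h', h''⟩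
      by_contra hcon
      have := N4 _ _ _ _ hi h (by omega)
      omega
    · have : nopen nw (k + 1) = nopen nw (nback nw (k + 1)) := by
        ext i'
        simp only [nopen, Set.mem_setOf_eq]
        constructor
        · rintro ⟨j, h, h', h''⟩
          have n1 : i' ≠ k + 1 := by rintro rfl; exact not_call_ret nw ⟨_, h⟩ ⟨_, hi⟩
          have n2 : i' ≠ i := by rintro rfl; have := N2 _ _ _ h hi; omega
          have n3 : ¬ i < i' := fun hl => by have := N4 _ _ _ _ hi h hl; omega
          exact ⟨j, h, by omega, by omega⟩
        · rintro ⟨j, h, h', h''⟩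
          have := N4 _ _ _ _ h hi (by omega)
          exact ⟨j, h, by omega, by omega⟩
      rw [nst, this, nst]
  hback := by
    intro k hk
    rw [Ne, nkind_ret_iff] at hk
    rw [nback, dif_neg hk]
    omega

theorem rel_iff (nw : NestedWord Δ) (i j : ℕ) : nw.rel i j ↔ j ∈ Finset.Icc 1 nw.len ∧
    nkind nw j = .ret ∧ nback nw j + 1 = i := by
  constructor
  · intro h
    have := nw.isNest.1 _ _ h
    refine ⟨?_, (nkind_ret_iff _ _).2 ⟨i, h⟩, nback_ret nw h⟩
    simp only [Finset.mem_Icc, NestedWord.len]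
    omega
  · rintro ⟨-, h, h'⟩
    obtain ⟨i', hi'⟩ := (nkind_ret_iff _ _).1 h
    rw [nback_ret nw hi'] at h'
    exact h' ▸ hi'

theorem len_pos (nw : NestedWord Δ) : 1 ≤ nw.len := by
  have := nw.ne
  rw [NestedWord.len]
  exact List.length_pos_iff.2 this

/-- letters enriched by assignments -/
structure Ltr (Δ : Type) : Type where
  lab : Δ
  F : ℕ → Prop
  S : ℕ → Prop

/-- encoding of an assignment -/
def enc (nw : NestedWord Δ) (γ1 : ℕ → ℕ) (γ2 : ℕ → Finset ℕ) (j : ℕ) : Ltr Δ :=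
  ⟨nw.letter j, fun x => j = γ1 x, fun X => j ∈ γ2 X⟩

/-- valid assignments -/
def Valid (nw : NestedWord Δ) (γ1 : ℕ → ℕ) : Prop := ∀ x, γ1 x ∈ Finset.Icc 1 nw.len

theorem Valid.upd {nw : NestedWord Δ} {γ1 : ℕ → ℕ} (h : Valid nw γ1) (x : ℕ) {i : ℕ}
    (hi : i ∈ Finset.Icc 1 nw.len) : Valid nw (Function.update γ1 x i) := by
  intro y
  by_cases hy : y = x
  · subst hy; simpa using hi
  · rw [Function.update_of_ne hy]; exact h y

/-- set a first-order mark -/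
def setF (x : ℕ) (a : Ltr Δ) (b : Prop) : Ltr Δ := { a with F := Function.update a.F x b }
/-- set a second-order mark -/
def setS (x : ℕ) (a : Ltr Δ) (b : Prop) : Ltr Δ := { a with S := Function.update a.S x b }

theorem enc_updF (nw : NestedWord Δ) (γ1 : ℕ → ℕ) (γ2 : ℕ → Finset ℕ) (x i : ℕ) :
    enc nw (Function.update γ1 x i) γ2 = fun j => setF x (enc nw γ1 γ2 j) (j = i) := by
  funext j
  simp only [enc, setF, Ltr.mk.injEq, true_and, and_true]
  funext y
  by_cases hy : y = x
  · subst hy; simp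
  · simp [Function.update_of_ne hy]

theorem enc_updS (nw : NestedWord Δ) (γ1 : ℕ → ℕ) (γ2 : ℕ → Finset ℕ) (x : ℕ) (T : Finset ℕ) :
    enc nw γ1 (Function.update γ2 x T) = fun j => setS x (enc nw γ1 γ2 j) (j ∈ T) := by
  funext j
  simp only [enc, setS, Ltr.mk.injEq, true_and]
  funext y
  by_cases hy : y = x
  · subst hy; simp
  · simp [Function.update_of_ne hy]

/-- step functions on nested words with assignments -/
def StepF {T : Type} (G : NestedWord Δ → (ℕ → ℕ) → (ℕ → Finset ℕ) → T) : Prop :=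
  ∃ F : Nst → (ℕ → Ltr Δ) → T, Step F ∧
    ∀ nw γ1 γ2, Valid nw γ1 → G nw γ1 γ2 = F (toNst nw) (enc nw γ1 γ2)

/-- regular functions on nested words with assignments -/
def RegF {K : Type} [CommSemiring K] (G : NestedWord Δ → (ℕ → ℕ) → (ℕ → Finset ℕ) → K) : Prop :=
  ∃ F : Nst → (ℕ → Ltr Δ) → K, Reg F ∧
    ∀ nw γ1 γ2, Valid nw γ1 → G nw γ1 γ2 = F (toNst nw) (enc nw γ1 γ2)

theorem StepF.const {T : Type} (t : T) : StepF (fun (_ : NestedWord Δ) _ _ => t) :=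
  ⟨_, Step.const t, fun _ _ _ _ => rfl⟩

theorem StepF.congr {T : Type} {G H : NestedWord Δ → (ℕ → ℕ) → (ℕ → Finset ℕ) → T}
    (hG : StepF G) (h : ∀ nw γ1 γ2, Valid nw γ1 → H nw γ1 γ2 = G nw γ1 γ2) : StepF H := by
  obtain ⟨F, hF, e⟩ := hG
  exact ⟨F, hF, fun nw γ1 γ2 hv => by rw [h _ _ _ hv, e _ _ _ hv]⟩

theorem StepF.map {T T' : Type} {G : NestedWord Δ → (ℕ → ℕ) → (ℕ → Finset ℕ) → T} (hG : StepF G)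
    (g : T → T') : StepF (fun nw γ1 γ2 => g (G nw γ1 γ2)) := by
  obtain ⟨F, hF, e⟩ := hG
  exact ⟨_, hF.map g, fun nw γ1 γ2 hv => by beta_reduce; rw [e _ _ _ hv]⟩

theorem StepF.map₂ {T T' T'' : Type} {G : NestedWord Δ → (ℕ → ℕ) → (ℕ → Finset ℕ) → T}
    {G' : NestedWord Δ → (ℕ → ℕ) → (ℕ → Finset ℕ) → T'} (hG : StepF G) (hG' : StepF G')
    (g : T → T' → T'') : StepF (fun nw γ1 γ2 => g (G nw γ1 γ2) (G' nw γ1 γ2)) := by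
  obtain ⟨F, hF, e⟩ := hG
  obtain ⟨F', hF', e'⟩ := hG'
  exact ⟨_, hF.map₂ hF' g, fun nw γ1 γ2 hv => by beta_reduce; rw [e _ _ _ hv, e' _ _ _ hv]⟩

theorem StepF.exF {G : NestedWord Δ → (ℕ → ℕ) → (ℕ → Finset ℕ) → Prop} (hG : StepF G) (x : ℕ) :
    StepF (fun nw γ1 γ2 => ∃ i ∈ Finset.Icc 1 nw.len, G nw (Function.update γ1 x i) γ2) := by
  obtain ⟨F, hF, e⟩ := hG
  refine ⟨_, hF.exMark (setF x), fun nw γ1 γ2 hv => ?_⟩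
  simp only [← enc_updF, eq_iff_iff]
  refine exists_congr fun i => and_congr_right fun hi => ?_
  rw [e _ _ _ (hv.upd x hi)]

theorem StepF.exS {G : NestedWord Δ → (ℕ → ℕ) → (ℕ → Finset ℕ) → Prop} (hG : StepF G) (x : ℕ) :
    StepF (fun nw γ1 γ2 => ∃ T ∈ (Finset.Icc 1 nw.len).powerset, G nw γ1 (Function.update γ2 x T)) := by
  obtain ⟨F, hF, e⟩ := hG
  refine ⟨_, hF.exSet (setS x), fun nw γ1 γ2 hv => ?_⟩
  simp only [← enc_updS, eq_iff_iff]
  refine exists_congr fun i => and_congr_right fun hi => ?_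
  rw [e _ _ _ hv]

section K
variable {K : Type} [CommSemiring K] {G H : NestedWord Δ → (ℕ → ℕ) → (ℕ → Finset ℕ) → K}

theorem StepF.sumF (hK : AddLocallyFinite K) (hG : StepF G) (x : ℕ) :
    StepF (fun nw γ1 γ2 => ∑ i ∈ Finset.Icc 1 nw.len, G nw (Function.update γ1 x i) γ2) := by
  obtain ⟨F, hF, e⟩ := hG
  refine ⟨_, hF.sumMark hK (setF x), fun nw γ1 γ2 hv => ?_⟩
  simp only [← enc_updF]
  exact Finset.sum_congr rfl fun i hi => e _ _ _ (hv.upd x hi)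

theorem StepF.sumS (hK : AddLocallyFinite K) (hG : StepF G) (x : ℕ) :
    StepF (fun nw γ1 γ2 => ∑ T ∈ (Finset.Icc 1 nw.len).powerset,
      G nw γ1 (Function.update γ2 x T)) := by
  obtain ⟨F, hF, e⟩ := hG
  refine ⟨_, hF.sumSet hK (setS x), fun nw γ1 γ2 hv => ?_⟩
  simp only [← enc_updS]
  exact Finset.sum_congr rfl fun i hi => e _ _ _ hv

theorem StepF.toRegF (hG : StepF G) : RegF G := by
  obtain ⟨F, hF, e⟩ := hG
  exact ⟨F, hF.toReg, e⟩

theorem RegF.add (hG : RegF G) (hH : RegF H) : RegF (fun nw γ1 γ2 => G nw γ1 γ2 + H nw γ1 γ2) := by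
  obtain ⟨F, hF, e⟩ := hG
  obtain ⟨F', hF', e'⟩ := hH
  exact ⟨_, hF.add hF', fun nw γ1 γ2 hv => by beta_reduce; rw [e _ _ _ hv, e' _ _ _ hv]⟩

theorem RegF.mul (hG : RegF G) (hH : RegF H) : RegF (fun nw γ1 γ2 => G nw γ1 γ2 * H nw γ1 γ2) := by
  obtain ⟨F, hF, e⟩ := hG
  obtain ⟨F', hF', e'⟩ := hH
  exact ⟨_, hF.mul hF', fun nw γ1 γ2 hv => by beta_reduce; rw [e _ _ _ hv, e' _ _ _ hv]⟩

theorem RegF.sumF (hG : RegF G) (x : ℕ) :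
    RegF (fun nw γ1 γ2 => ∑ i ∈ Finset.Icc 1 nw.len, G nw (Function.update γ1 x i) γ2) := by
  obtain ⟨F, hF, e⟩ := hG
  refine ⟨_, hF.sumMark (setF x), fun nw γ1 γ2 hv => ?_⟩
  simp only [← enc_updF]
  exact Finset.sum_congr rfl fun i hi => e _ _ _ (hv.upd x hi)

theorem RegF.sumS (hG : RegF G) (x : ℕ) :
    RegF (fun nw γ1 γ2 => ∑ T ∈ (Finset.Icc 1 nw.len).powerset,
      G nw γ1 (Function.update γ2 x T)) := by
  obtain ⟨F, hF, e⟩ := hG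
  refine ⟨_, hF.sumSet (setS x), fun nw γ1 γ2 hv => ?_⟩
  simp only [← enc_updS]
  exact Finset.sum_congr rfl fun i hi => e _ _ _ hv

theorem StepF.prodF (hG : StepF G) (x : ℕ) :
    RegF (fun nw γ1 γ2 => ∏ i ∈ Finset.Icc 1 nw.len, G nw (Function.update γ1 x i) γ2) := by
  obtain ⟨F, hF, e⟩ := hG
  refine ⟨_, Reg.prodMark hF (setF x), fun nw γ1 γ2 hv => ?_⟩
  simp only [← enc_updF]
  exact Finset.prod_congr rfl fun i hi => e _ _ _ (hv.upd x hi)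

theorem NWRegular_of_Reg {F : Nst → (ℕ → Δ) → K} (hF : Reg F) (S : NestedWord Δ → K)
    (h : ∀ nw, S nw = F (toNst nw) nw.letter) : NWRegular S := by
  obtain ⟨A, hA⟩ := hF
  refine ⟨⟨A.Q, A.ini, fun p a q => A.tr .call p p a q, fun p a q => A.tr .int p p a q,
    fun p c a q => A.tr .ret p c a q, A.fi⟩, fun nw => ?_⟩
  rw [h, ← hA]
  refine Finset.sum_congr rfl fun r _ => ?_
  congr 2
  refine Finset.prod_congr rfl fun j hj => ?_
  simp only [WNWA.posWeight, WA.wt, toNst, nkind, nback]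
  by_cases hc : nw.IsCall j
  · have hr : ¬ nw.IsReturn j := fun hr => not_call_ret nw hc hr
    simp [hc, hr]
  · by_cases hr : nw.IsReturn j
    · simp [hc, hr]
    · simp [hc, hr]

theorem RegF.toNWRegular (hG : RegF G) (S : NestedWord Δ → K)
    (h : ∀ nw γ1 γ2, G nw γ1 γ2 = S nw) : NWRegular S := by
  classical
  obtain ⟨F, hF, e⟩ := hG
  have h1 := Reg.sumMark ((hF.relabel (Prod.fst : Ltr Δ × Prop → Ltr Δ)).mul
    ((Step.exPos2 (fun a : Ltr Δ × Prop => ¬ a.2) (fun a => a.2)).map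
      (fun b => if b then (0 : K) else 1)).toReg)
    (fun (a : Δ) (b : Prop) => ((⟨a, fun _ => b, fun _ => False⟩, b) : Ltr Δ × Prop))
  refine NWRegular_of_Reg h1 S fun nw => ?_
  have hl := len_pos nw
  rw [Finset.sum_eq_single 1]
  · rw [if_neg, mul_one]
    · rw [← h nw (fun _ => 1) (fun _ => ∅), e]
      · congr 1
        funext j
        simp [enc]
      · intro x; simpa using hl
    · rintro ⟨j, hj, i, hi, hij, h1, h2⟩
      rw [Finset.mem_Icc] at hi
      simp only at h2
      omega
  · intro b hb hb1
    rw [if_pos, mul_zero]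
    rw [Finset.mem_Icc] at hb
    have hn : (toNst nw).n = nw.len := rfl
    exact ⟨b, Finset.mem_Icc.2 hb, 1, by rw [hn]; simpa using hl, by omega, fun h => hb1 h.symm, rfl⟩
  · intro h
    exact absurd (Finset.mem_Icc.2 ⟨le_rfl, hl⟩) h

end K
end
end NWA

namespace NWA

section
variable {Δ : Type}

/-- Classical semantics. -/
def holds (nw : NestedWord Δ) : MSOF Δ → (ℕ → ℕ) → (ℕ → Finset ℕ) → Prop
  | .eqv x y, γ1, _ => γ1 x = γ1 y
  | .lab a x, γ1, _ => nw.letter (γ1 x) = a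
  | .lev x y, γ1, _ => γ1 x ≤ γ1 y
  | .nuv x y, γ1, _ => nw.rel (γ1 x) (γ1 y)
  | .mem x X, γ1, γ2 => γ1 x ∈ γ2 X
  | .not φ, γ1, γ2 => ¬ holds nw φ γ1 γ2
  | .or φ ψ, γ1, γ2 => holds nw φ γ1 γ2 ∨ holds nw ψ γ1 γ2
  | .and φ ψ, γ1, γ2 => holds nw φ γ1 γ2 ∧ holds nw ψ γ1 γ2
  | .exF x φ, γ1, γ2 => ∃ i ∈ Finset.Icc 1 nw.len, holds nw φ (Function.update γ1 x i) γ2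
  | .exS X φ, γ1, γ2 =>
      ∃ T ∈ (Finset.Icc 1 nw.len).powerset, holds nw φ γ1 (Function.update γ2 X T)
  | .alF x φ, γ1, γ2 => ∀ i ∈ Finset.Icc 1 nw.len, holds nw φ (Function.update γ1 x i) γ2
  | .alS X φ, γ1, γ2 =>
      ∀ T ∈ (Finset.Icc 1 nw.len).powerset, holds nw φ γ1 (Function.update γ2 X T)

theorem upd_agree {T : Type} {γ γ' : ℕ → T} {m x : ℕ} (h : ∀ z ≤ max x m, γ z = γ' z) (i : T) :
    ∀ z ≤ m, Function.update γ x i z = Function.update γ' x i z := by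
  intro z hz
  by_cases hzx : z = x
  · subst hzx; simp
  · rw [Function.update_of_ne hzx, Function.update_of_ne hzx, h z (by omega)]

theorem upd_agree' {T : Type} {γ γ' : ℕ → T} {m x : ℕ} (h : ∀ z ≤ m, γ z = γ' z) (i : T) :
    ∀ z ≤ m, Function.update γ x i z = Function.update γ' x i z :=
  fun z hz => by
  by_cases hzx : z = x
  · subst hzx; simp
  · rw [Function.update_of_ne hzx, Function.update_of_ne hzx, h z (by omega)]

theorem holds_congr (nw : NestedWord Δ) (ψ : MSOF Δ) : ∀ (γ1 γ1' : ℕ → ℕ) (γ2 γ2' : ℕ → Finset ℕ),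
    (∀ z ≤ ψ.maxF, γ1 z = γ1' z) → (∀ z ≤ ψ.maxS, γ2 z = γ2' z) →
    (holds nw ψ γ1 γ2 ↔ holds nw ψ γ1' γ2') := by
  induction ψ with
  | eqv x y => intro _ _ _ _ h _; simp only [holds]; rw [h x (le_max_left _ _), h y (le_max_right _ _)]
  | lab a x => intro _ _ _ _ h _; simp only [holds]; rw [h x le_rfl]
  | lev x y => intro _ _ _ _ h _; simp only [holds]; rw [h x (le_max_left _ _), h y (le_max_right _ _)]
  | nuv x y => intro _ _ _ _ h _; simp only [holds]; rw [h x (le_max_left _ _), h y (le_max_right _ _)]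
  | mem x X => intro _ _ _ _ h h'; simp only [holds]; rw [h x le_rfl, h' X le_rfl]
  | not φ ih => intro _ _ _ _ h h'; simp only [holds]; rw [ih _ _ _ _ h h']
  | or φ ψ ih ih' =>
    intro _ _ _ _ h h'
    simp only [holds]
    rw [ih _ _ _ _ (fun z hz => h z (hz.trans (le_max_left _ _))) (fun z hz => h' z (hz.trans (le_max_left _ _))),
      ih' _ _ _ _ (fun z hz => h z (hz.trans (le_max_right _ _))) (fun z hz => h' z (hz.trans (le_max_right _ _)))]
  | and φ ψ ih ih' =>
    intro _ _ _ _ h h'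
    simp only [holds]
    rw [ih _ _ _ _ (fun z hz => h z (hz.trans (le_max_left _ _))) (fun z hz => h' z (hz.trans (le_max_left _ _))),
      ih' _ _ _ _ (fun z hz => h z (hz.trans (le_max_right _ _))) (fun z hz => h' z (hz.trans (le_max_right _ _)))]
  | exF x φ ih =>
    intro _ _ _ _ h h'
    simp only [holds]
    exact exists_congr fun i => and_congr_right fun _ => ih _ _ _ _ (upd_agree h i) h'
  | exS x φ ih =>
    intro _ _ _ _ h h'
    simp only [holds]
    exact exists_congr fun i => and_congr_right fun _ => ih _ _ _ _ h (upd_agree h' i)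
  | alF x φ ih =>
    intro _ _ _ _ h h'
    simp only [holds]
    exact forall_congr' fun i => forall_congr' fun _ => ih _ _ _ _ (upd_agree h i) h'
  | alS x φ ih =>
    intro _ _ _ _ h h'
    simp only [holds]
    exact forall_congr' fun i => forall_congr' fun _ => ih _ _ _ _ h (upd_agree h' i)

theorem upd_ite {T : Type} (γ : ℕ → T) (x y u : ℕ) :
    γ (if u = x then y else u) = Function.update γ x (γ y) u := by
  by_cases h : u = x
  · subst h; simp
  · simp [h]

theorem upd_swap {T : Type} (γ : ℕ → T) (x y z : ℕ) (i : T) (hzx : z ≠ x) (hy : z < y) :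
    Function.update (Function.update γ z i) x (Function.update γ z i y)
      = Function.update (Function.update γ x (γ y)) z i := by
  rw [Function.update_of_ne (by omega : y ≠ z), Function.update_comm hzx]

theorem holds_substF (nw : NestedWord Δ) (x y : ℕ) (ψ : MSOF Δ) :
    ∀ (γ1 : ℕ → ℕ) (γ2 : ℕ → Finset ℕ), ψ.maxF < y →
    (holds nw (ψ.substF x y) γ1 γ2 ↔ holds nw ψ (Function.update γ1 x (γ1 y)) γ2) := by
  induction ψ with
  | eqv u v => intro _ _ _; simp only [MSOF.substF, holds]; simp only [upd_ite]
  | lab a u => intro _ _ _; simp only [MSOF.substF, holds]; simp only [upd_ite]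
  | lev u v => intro _ _ _; simp only [MSOF.substF, holds]; simp only [upd_ite]
  | nuv u v => intro _ _ _; simp only [MSOF.substF, holds]; simp only [upd_ite]
  | mem u X => intro _ _ _; simp only [MSOF.substF, holds]; simp only [upd_ite]
  | not φ ih => intro _ _ h; simp only [MSOF.substF, holds]; rw [ih _ _ h]
  | or φ ψ ih ih' =>
    intro _ _ h
    simp only [MSOF.maxF, max_lt_iff] at h
    simp only [MSOF.substF, holds]; rw [ih _ _ h.1, ih' _ _ h.2]
  | and φ ψ ih ih' =>
    intro _ _ h
    simp only [MSOF.maxF, max_lt_iff] at h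
    simp only [MSOF.substF, holds]; rw [ih _ _ h.1, ih' _ _ h.2]
  | exF z φ ih =>
    intro _ _ h
    simp only [MSOF.maxF, max_lt_iff] at h
    simp only [MSOF.substF]
    split_ifs with hzx
    · subst hzx; simp only [holds, Function.update_idem]
    · simp only [holds]
      exact exists_congr fun i => and_congr_right fun _ => by rw [ih _ _ h.2, upd_swap _ _ _ _ _ hzx h.1]
  | exS z φ ih =>
    intro _ _ h
    simp only [MSOF.substF, holds]
    exact exists_congr fun i => and_congr_right fun _ => by rw [ih _ _ h]
  | alF z φ ih =>
    intro _ _ h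
    simp only [MSOF.maxF, max_lt_iff] at h
    simp only [MSOF.substF]
    split_ifs with hzx
    · subst hzx; simp only [holds, Function.update_idem]
    · simp only [holds]
      exact forall_congr' fun i => forall_congr' fun _ => by rw [ih _ _ h.2, upd_swap _ _ _ _ _ hzx h.1]
  | alS z φ ih =>
    intro _ _ h
    simp only [MSOF.substF, holds]
    exact forall_congr' fun i => forall_congr' fun _ => by rw [ih _ _ h]

theorem holds_substS (nw : NestedWord Δ) (x y : ℕ) (ψ : MSOF Δ) :
    ∀ (γ1 : ℕ → ℕ) (γ2 : ℕ → Finset ℕ), ψ.maxS < y →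
    (holds nw (ψ.substS x y) γ1 γ2 ↔ holds nw ψ γ1 (Function.update γ2 x (γ2 y))) := by
  induction ψ with
  | eqv u v => intro _ _ _; rfl
  | lab a u => intro _ _ _; rfl
  | lev u v => intro _ _ _; rfl
  | nuv u v => intro _ _ _; rfl
  | mem u X => intro _ _ _; simp only [MSOF.substS, holds]; simp only [upd_ite]
  | not φ ih => intro _ _ h; simp only [MSOF.substS, holds]; rw [ih _ _ h]
  | or φ ψ ih ih' =>
    intro _ _ h
    simp only [MSOF.maxS, max_lt_iff] at h
    simp only [MSOF.substS, holds]; rw [ih _ _ h.1, ih' _ _ h.2]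
  | and φ ψ ih ih' =>
    intro _ _ h
    simp only [MSOF.maxS, max_lt_iff] at h
    simp only [MSOF.substS, holds]; rw [ih _ _ h.1, ih' _ _ h.2]
  | exS z φ ih =>
    intro _ _ h
    simp only [MSOF.maxS, max_lt_iff] at h
    simp only [MSOF.substS]
    split_ifs with hzx
    · subst hzx; simp only [holds, Function.update_idem]
    · simp only [holds]
      exact exists_congr fun i => and_congr_right fun _ => by rw [ih _ _ h.2, upd_swap _ _ _ _ _ hzx h.1]
  | exF z φ ih =>
    intro _ _ h
    simp only [MSOF.substS, holds]
    exact exists_congr fun i => and_congr_right fun _ => by rw [ih _ _ h]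
  | alS z φ ih =>
    intro _ _ h
    simp only [MSOF.maxS, max_lt_iff] at h
    simp only [MSOF.substS]
    split_ifs with hzx
    · subst hzx; simp only [holds, Function.update_idem]
    · simp only [holds]
      exact forall_congr' fun i => forall_congr' fun _ => by rw [ih _ _ h.2, upd_swap _ _ _ _ _ hzx h.1]
  | alF z φ ih =>
    intro _ _ h
    simp only [MSOF.substS, holds]
    exact forall_congr' fun i => forall_congr' fun _ => by rw [ih _ _ h]

/-- lexicographic key of a finite set -/
def key (T : Finset ℕ) : Lex (ℕ → Prop) := toLex (fun j => j ∈ T)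

theorem key_inj : Function.Injective key := by
  intro T T' h
  ext j
  have := congrFun (toLex.injective h) j
  simpa using this

theorem key_lt (T T' : Finset ℕ) : key T < key T' ↔
    ∃ i, (∀ j < i, j ∈ T ↔ j ∈ T') ∧ i ∉ T ∧ i ∈ T' := by
  have : key T < key T' ↔ ∃ i, (∀ j < i, (j ∈ T) = (j ∈ T')) ∧ (i ∈ T) < (i ∈ T') := Iff.rfl
  rw [this]
  refine exists_congr fun i => ?_
  simp only [eq_iff_iff]
  refine and_congr_right fun _ => ?_
  rw [lt_iff_le_not_ge]
  simp only [le_Prop_eq]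
  tauto

theorem holds_lessSet (nw : NestedWord Δ) (X Y : ℕ) (γ1 : ℕ → ℕ) (γ2 : ℕ → Finset ℕ)
    (hX : γ2 X ⊆ Finset.Icc 1 nw.len) (hY : γ2 Y ⊆ Finset.Icc 1 nw.len) :
    holds nw (lessSet Y X) γ1 γ2 ↔ key (γ2 Y) < key (γ2 X) := by
  rw [key_lt]
  simp only [lessSet, holds, Function.update_self]
  constructor
  · rintro ⟨i, hi, h1, h2, h3⟩
    refine ⟨i, fun j hj => ?_, h2, h1⟩
    by_cases hjn : j ∈ Finset.Icc 1 nw.len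
    · have := h3 j hjn
      simp only [ne_eq, zero_ne_one, not_false_eq_true, Function.update_of_ne, Function.update_self] at this
      have : ¬ i ≤ j := by omega
      tauto
    · exact ⟨fun h => absurd (hY h) hjn, fun h => absurd (hX h) hjn⟩
  · rintro ⟨i, h1, h2, h3⟩
    refine ⟨i, hX h3, h3, h2, fun j hj => ?_⟩
    simp only [ne_eq, zero_ne_one, not_false_eq_true, Function.update_of_ne, Function.update_self]
    by_cases hij : i ≤ j
    · exact Or.inl hij
    · have := h1 j (by omega)
      tauto

section K
variable {K : Type} [CommSemiring K]

theorem prod_ind {α : Type} (s : Finset α) (p : α → Prop) [DecidablePred p]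
    [Decidable (∀ k ∈ s, p k)] :
    ∏ k ∈ s, (if p k then (1 : K) else 0) = if ∀ k ∈ s, p k then 1 else 0 := by
  split_ifs with h
  · exact Finset.prod_eq_one fun k hk => if_pos (h k hk)
  · push Not at h
    obtain ⟨k, hk, hp⟩ := h
    exact Finset.prod_eq_zero hk (if_neg hp)

theorem prod_ind' {α : Type} (s : Finset α) (p : α → Prop) [DecidablePred p]
    [Decidable (∃ k ∈ s, p k)] :
    ∏ k ∈ s, (if p k then (0 : K) else 1) = if ∃ k ∈ s, p k then 0 else 1 := by
  split_ifs with h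
  · obtain ⟨k, hk, hp⟩ := h
    exact Finset.prod_eq_zero hk (if_pos hp)
  · push Not at h
    exact Finset.prod_eq_one fun k hk => if_neg (h k hk)

open Classical in
theorem sum_least {α β : Type} [LinearOrder β] (f : α → β) (hf : Function.Injective f)
    (s : Finset α) (p : α → Prop) :
    ∑ i ∈ s, (if p i then (1 : K) else 0) * ∏ k ∈ s, (if f k < f i ∧ p k then (0 : K) else 1)
      = if ∃ i ∈ s, p i then 1 else 0 := by
  simp only [prod_ind']
  split_ifs with h
  · have hne : (s.filter p).Nonempty := by
      obtain ⟨i, hi, hp⟩ := h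
      exact ⟨i, Finset.mem_filter.2 ⟨hi, hp⟩⟩
    obtain ⟨m, hm, hmin⟩ := Finset.exists_min_image (s.filter p) f hne
    rw [Finset.mem_filter] at hm
    rw [Finset.sum_eq_single m]
    · rw [if_pos hm.2, if_neg, one_mul]
      rintro ⟨k, hk, hlt, hp⟩
      exact absurd (hmin k (Finset.mem_filter.2 ⟨hk, hp⟩)) (not_le.2 hlt)
    · intro b hb hbm
      by_cases hp : p b
      · rw [if_pos hp, if_pos ⟨m, hm.1, lt_of_le_of_ne (hmin b (Finset.mem_filter.2 ⟨hb, hp⟩))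
          (fun e => hbm (hf e).symm), hm.2⟩, mul_zero]
      · rw [if_neg hp, zero_mul]
    · intro h; exact absurd hm.1 h
  · push Not at h
    exact Finset.sum_eq_zero fun i hi => by rw [if_neg (h i hi), zero_mul]

end K
end
end NWA

namespace NWA

section
variable {Δ : Type} {K : Type} [CommSemiring K]

open Classical in
/-- indicator -/
noncomputable def ind (K : Type) [CommSemiring K] (p : Prop) : K := if p then 1 else 0

theorem ite_ind (p : Prop) [Decidable p] : (if p then (1 : K) else 0) = ind K p := by
  unfold ind; congr

theorem ite_ind' (p : Prop) [Decidable p] : (if p then (0 : K) else 1) = ind K (¬ p) := by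
  unfold ind; by_cases h : p <;> simp [h]

theorem ind_mul (p q : Prop) : ind K p * ind K q = ind K (p ∧ q) := by
  unfold ind; by_cases h : p <;> by_cases h' : q <;> simp [h, h']

theorem ind_or (p q : Prop) : ind K p + ind K (¬ p) * ind K q = ind K (p ∨ q) := by
  unfold ind; by_cases h : p <;> by_cases h' : q <;> simp [h, h']

theorem ind_prod {α : Type} (s : Finset α) (p : α → Prop) :
    ∏ k ∈ s, ind K (p k) = ind K (∀ k ∈ s, p k) := by
  classical
  unfold ind
  convert prod_ind (K := K) s p

theorem ind_least {α β : Type} [LinearOrder β] (f : α → β) (hf : Function.Injective f)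
    (s : Finset α) (p : α → Prop) :
    ∑ i ∈ s, ind K (p i) * ∏ k ∈ s, ind K (¬ (f k < f i ∧ p k)) = ind K (∃ i ∈ s, p i) := by
  classical
  have := sum_least (K := K) f hf s p
  simp only [ite_ind, ite_ind'] at this
  exact this

theorem least_F (nw : NestedWord Δ) (x y : ℕ) (ψ : MSOF Δ) (hy : y = max x ψ.maxF + 1)
    (γ1 : ℕ → ℕ) (γ2 : ℕ → Finset ℕ) (i k : ℕ) :
    (holds nw (.and (.not (.lev x y)) (ψ.substF x y))
      (Function.update (Function.update γ1 x i) y k) γ2) ↔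
      (k < i ∧ holds nw ψ (Function.update γ1 x k) γ2) := by
  have hxy : x ≠ y := by omega
  simp only [holds]
  rw [holds_substF _ _ _ _ _ _ (by omega)]
  rw [Function.update_self, Function.update_of_ne hxy, Function.update_self, not_le]
  refine and_congr_right fun _ => holds_congr _ _ _ _ _ _ ?_ (fun _ _ => rfl)
  intro z hz
  by_cases hzx : z = x
  · subst hzx; simp
  · rw [Function.update_of_ne hzx, Function.update_of_ne (by omega), Function.update_of_ne hzx,
      Function.update_of_ne hzx]

theorem least_F' (nw : NestedWord Δ) (x y : ℕ) (ψ : MSOF Δ) (hy : y = max x ψ.maxF + 1)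
    (γ1 : ℕ → ℕ) (γ2 : ℕ → Finset ℕ) (i k : ℕ) :
    (holds nw (.and (.not (.lev x y)) (.not (ψ.substF x y)))
      (Function.update (Function.update γ1 x i) y k) γ2) ↔
      (k < i ∧ ¬ holds nw ψ (Function.update γ1 x k) γ2) :=
  least_F nw x y (.not ψ) hy γ1 γ2 i k

theorem lessSet_maxF (X Y : ℕ) : (lessSet Y X : MSOF Δ).maxF = 1 := by
  simp [lessSet, MSOF.maxF]

theorem least_S (nw : NestedWord Δ) (x y : ℕ) (ψ : MSOF Δ) (hy : y = max x ψ.maxS + 1)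
    (γ1 : ℕ → ℕ) (γ2 : ℕ → Finset ℕ) (i k : Finset ℕ) (hi : i ∈ (Finset.Icc 1 nw.len).powerset)
    (hk : k ∈ (Finset.Icc 1 nw.len).powerset) :
    (holds nw (.and (lessSet y x) (ψ.substS x y))
      γ1 (Function.update (Function.update γ2 x i) y k)) ↔
      (key k < key i ∧ holds nw ψ γ1 (Function.update γ2 x k)) := by
  have hxy : x ≠ y := by omega
  have e1 : Function.update (Function.update γ2 x i) y k x = i := by
    rw [Function.update_of_ne hxy, Function.update_self]
  have e2 : Function.update (Function.update γ2 x i) y k y = k := by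
    rw [Function.update_self]
  simp only [holds]
  rw [holds_substS _ _ _ _ _ _ (by omega), holds_lessSet _ _ _ _ _ (by rw [e1]; simpa using hi)
    (by rw [e2]; simpa using hk), e1, e2]
  refine and_congr_right fun _ => holds_congr _ _ _ _ _ _ (fun _ _ => rfl) ?_
  intro z hz
  by_cases hzx : z = x
  · subst hzx; simp
  · rw [Function.update_of_ne hzx, Function.update_of_ne (by omega), Function.update_of_ne hzx,
      Function.update_of_ne hzx]

theorem least_S' (nw : NestedWord Δ) (x y : ℕ) (ψ : MSOF Δ) (hy : y = max x ψ.maxS + 1)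
    (γ1 : ℕ → ℕ) (γ2 : ℕ → Finset ℕ) (i k : Finset ℕ) (hi : i ∈ (Finset.Icc 1 nw.len).powerset)
    (hk : k ∈ (Finset.Icc 1 nw.len).powerset) :
    (holds nw (.and (lessSet y x) (.not (ψ.substS x y)))
      γ1 (Function.update (Function.update γ2 x i) y k)) ↔
      (key k < key i ∧ ¬ holds nw ψ γ1 (Function.update γ2 x k)) :=
  least_S nw x y (.not ψ) hy γ1 γ2 i k hi hk

mutual
theorem sem_plus (nw : NestedWord Δ) : ∀ {ψ : MSOF Δ} {a : WMSO K Δ}, PlusOf K ψ a →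
    ∀ γ1 γ2, a.sem nw γ1 γ2 = ind K (holds nw ψ γ1 γ2)
  | _, _, .eqv x y => fun γ1 γ2 => by simp only [WMSO.sem, holds, ite_ind]
  | _, _, .lab a x => fun γ1 γ2 => by simp only [WMSO.sem, holds, ite_ind]
  | _, _, .lev x y => fun γ1 γ2 => by simp only [WMSO.sem, holds, ite_ind]
  | _, _, .nuv x y => fun γ1 γ2 => by simp only [WMSO.sem, holds, ite_ind]
  | _, _, .mem x y => fun γ1 γ2 => by simp only [WMSO.sem, holds, ite_ind]
  | _, _, .not h => fun γ1 γ2 => by simp only [holds, sem_minus nw h]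
  | _, _, .or h1 h2 h3 => fun γ1 γ2 => by
    simp only [WMSO.sem, holds, sem_plus nw h1, sem_minus nw h2, sem_plus nw h3, ind_or]
  | _, _, .and h1 h2 => fun γ1 γ2 => by
    simp only [WMSO.sem, holds, sem_plus nw h1, sem_plus nw h2, ind_mul]
  | _, _, .exF (x := x) (ψ := ψ) y hy h1 h2 => fun γ1 γ2 => by
    simp only [WMSO.sem, holds.eq_9, sem_plus nw h1, sem_minus nw h2,
      least_F nw x y ψ hy]
    exact ind_least (fun k : ℕ => k) (fun _ _ h => h) _ _
  | _, _, .alF h => fun γ1 γ2 => by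
    simp only [WMSO.sem, holds, sem_plus nw h, ind_prod]
  | _, _, .exS (X := x) (ψ := ψ) y hy h1 h2 => fun γ1 γ2 => by
    simp only [WMSO.sem, holds.eq_10, sem_plus nw h1, sem_minus nw h2]
    rw [← ind_least key key_inj]
    refine Finset.sum_congr rfl fun T hT => ?_
    congr 1
    refine Finset.prod_congr rfl fun T' hT' => ?_
    rw [least_S nw x y ψ hy _ _ _ _ hT hT']; rfl
  | _, _, .alS h => fun γ1 γ2 => by
    simp only [WMSO.sem, holds, sem_plus nw h, ind_prod]

theorem sem_minus (nw : NestedWord Δ) : ∀ {ψ : MSOF Δ} {a : WMSO K Δ}, MinusOf K ψ a →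
    ∀ γ1 γ2, a.sem nw γ1 γ2 = ind K (¬ holds nw ψ γ1 γ2)
  | _, _, .eqv x y => fun γ1 γ2 => by simp only [WMSO.sem, holds, ite_ind']
  | _, _, .lab a x => fun γ1 γ2 => by simp only [WMSO.sem, holds, ite_ind']
  | _, _, .lev x y => fun γ1 γ2 => by simp only [WMSO.sem, holds, ite_ind']
  | _, _, .nuv x y => fun γ1 γ2 => by simp only [WMSO.sem, holds, ite_ind']
  | _, _, .mem x y => fun γ1 γ2 => by simp only [WMSO.sem, holds, ite_ind']
  | _, _, .not h => fun γ1 γ2 => by simp only [holds, sem_plus nw h, not_not]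
  | _, _, .or h1 h2 => fun γ1 γ2 => by
    simp only [WMSO.sem, holds, sem_minus nw h1, sem_minus nw h2, ind_mul, not_or]
  | _, _, .and h1 h2 h3 => fun γ1 γ2 => by
    have := ind_or (K := K)
    simp only [WMSO.sem, holds, sem_minus nw h1, sem_plus nw h2, sem_minus nw h3]
    rw [not_and_or, ← ind_or, not_not]
  | _, _, .exF h => fun γ1 γ2 => by
    simp only [WMSO.sem, holds, sem_minus nw h, ind_prod, not_exists, not_and]
  | _, _, .alF (x := x) (ψ := ψ) y hy h1 h2 => fun γ1 γ2 => by
    simp only [WMSO.sem, holds.eq_11, sem_minus nw h1, sem_minus nw h2,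
      least_F' nw x y ψ hy, not_forall]
    rw [ind_least (fun k : ℕ => k) (fun _ _ h => h)]
    simp only [exists_prop]
  | _, _, .exS h => fun γ1 γ2 => by
    simp only [WMSO.sem, holds, sem_minus nw h, ind_prod, not_exists, not_and]
  | _, _, .alS (X := x) (ψ := ψ) y hy h1 h2 => fun γ1 γ2 => by
    simp only [WMSO.sem, holds.eq_12, sem_minus nw h1, sem_minus nw h2, not_forall, exists_prop]
    rw [← ind_least key key_inj]
    refine Finset.sum_congr rfl fun T hT => ?_
    congr 1
    refine Finset.prod_congr rfl fun T' hT' => ?_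
    rw [least_S' nw x y ψ hy _ _ _ _ hT hT']; rfl
end

theorem holds_stepF (ψ : MSOF Δ) : StepF (fun nw γ1 γ2 => holds nw ψ γ1 γ2) := by
  classical
  induction ψ with
  | eqv x y =>
    refine ⟨_, Step.exPos (fun a => a.F x ∧ a.F y), fun nw γ1 γ2 hv => ?_⟩
    simp only [holds, enc, eq_iff_iff]
    constructor
    · intro h; exact ⟨γ1 x, hv x, rfl, h⟩
    · rintro ⟨j, _, h, h'⟩; rw [← h, ← h']
  | lab a x =>
    refine ⟨_, Step.exPos (fun c => c.F x ∧ c.lab = a), fun nw γ1 γ2 hv => ?_⟩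
    simp only [holds, enc, eq_iff_iff]
    constructor
    · intro h; exact ⟨γ1 x, hv x, rfl, h⟩
    · rintro ⟨j, _, h, h'⟩; rw [← h, ← h']
  | lev x y =>
    refine ⟨_, (Step.exPos (fun a => a.F x ∧ a.F y)).map₂ (Step.exPos2 (fun a => a.F x) (fun a => a.F y))
      (fun a b => a ∨ b), fun nw γ1 γ2 hv => ?_⟩
    simp only [holds, enc, eq_iff_iff]
    constructor
    · intro h
      rcases lt_or_eq_of_le h with h | h
      · exact Or.inr ⟨γ1 y, hv y, γ1 x, hv x, h, rfl, rfl⟩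
      · exact Or.inl ⟨γ1 x, hv x, rfl, h⟩
    · rintro (⟨j, _, h, h'⟩ | ⟨j, _, i, _, hij, h, h'⟩) <;> omega
  | nuv x y =>
    refine ⟨_, (Step.exRet (fun a => a.F x) (fun a => a.F y)), fun nw γ1 γ2 hv => ?_⟩
    simp only [holds, enc, eq_iff_iff, rel_iff]
    constructor
    · rintro ⟨h1, h2, h3⟩; exact ⟨γ1 y, hv y, h2, h3, rfl⟩
    · rintro ⟨j, h1, h2, h3, rfl⟩; exact ⟨h1, h2, h3⟩
  | mem x X =>
    refine ⟨_, Step.exPos (fun c => c.F x ∧ c.S X), fun nw γ1 γ2 hv => ?_⟩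
    simp only [holds, enc, eq_iff_iff]
    constructor
    · intro h; exact ⟨γ1 x, hv x, rfl, h⟩
    · rintro ⟨j, _, h, h'⟩; rw [← h]; exact h'
  | not φ ih => exact ih.map Not
  | or φ ψ ih ih' => exact ih.map₂ ih' Or
  | and φ ψ ih ih' => exact ih.map₂ ih' And
  | exF x φ ih => exact ih.exF x
  | exS x φ ih => exact ih.exS x
  | alF x φ ih =>
    refine (((ih.map Not).exF x).map Not).congr fun nw γ1 γ2 _ => ?_
    simp [holds]
  | alS x φ ih =>
    refine (((ih.map Not).exS x).map Not).congr fun nw γ1 γ2 _ => ?_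
    simp [holds]

theorem ind_stepF (ψ : MSOF Δ) : StepF (fun nw γ1 γ2 => ind K (holds nw ψ γ1 γ2)) :=
  (holds_stepF ψ).map _

theorem unamb_stepF {φ : WMSO K Δ} (h : SyntUnamb φ) : StepF (fun nw γ1 γ2 => φ.sem nw γ1 γ2) := by
  obtain ⟨ψ, h | h⟩ := h
  · exact (ind_stepF ψ).congr fun nw γ1 γ2 _ => sem_plus nw h γ1 γ2
  · exact (ind_stepF (.not ψ)).congr fun nw γ1 γ2 _ => sem_minus nw h γ1 γ2

theorem WUMSO_stepF (hK : AddLocallyFinite K) {φ : WMSO K Δ} (h : WUMSO φ) :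
    StepF (fun nw γ1 γ2 => φ.sem nw γ1 γ2) := by
  induction h with
  | const k => exact StepF.const k
  | unamb h => exact unamb_stepF h
  | and _ _ ih ih' => exact ih.map₂ ih' (fun a b => a * b)
  | or _ _ ih ih' => exact ih.map₂ ih' (fun a b => a + b)
  | exF _ ih => exact ih.sumF hK _
  | exS _ ih => exact ih.sumS hK _

theorem SWRMSO_regF (hK : AddLocallyFinite K) (φ : WMSO K Δ) (h : SWRMSO φ) :
    RegF (fun nw γ1 γ2 => φ.sem nw γ1 γ2) := by
  induction φ with
  | const k => exact (StepF.const k).toRegF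
  | eqv x y => exact (unamb_stepF ⟨.eqv x y, Or.inl (.eqv x y)⟩).toRegF
  | lab x y => exact (unamb_stepF ⟨.lab x y, Or.inl (.lab x y)⟩).toRegF
  | lev x y => exact (unamb_stepF ⟨.lev x y, Or.inl (.lev x y)⟩).toRegF
  | nuv x y => exact (unamb_stepF ⟨.nuv x y, Or.inl (.nuv x y)⟩).toRegF
  | mem x y => exact (unamb_stepF ⟨.mem x y, Or.inl (.mem x y)⟩).toRegF
  | neq x y => exact (unamb_stepF ⟨.eqv x y, Or.inr (.eqv x y)⟩).toRegF
  | nlab x y => exact (unamb_stepF ⟨.lab x y, Or.inr (.lab x y)⟩).toRegF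
  | nle x y => exact (unamb_stepF ⟨.lev x y, Or.inr (.lev x y)⟩).toRegF
  | nnu x y => exact (unamb_stepF ⟨.nuv x y, Or.inr (.nuv x y)⟩).toRegF
  | nmem x y => exact (unamb_stepF ⟨.mem x y, Or.inr (.mem x y)⟩).toRegF
  | or φ ψ ih ih' => exact (ih h.1).add (ih' h.2)
  | and φ ψ ih ih' => exact (ih h.1).mul (ih' h.2)
  | exF x φ ih => exact (ih h).sumF x
  | exS x φ ih => exact (ih h).sumS x
  | alF x φ ih => exact (WUMSO_stepF hK h.1).prodF x
  | alS x φ ih =>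
    obtain ⟨ψ, h | h⟩ := h.1
    · exact (unamb_stepF ⟨.alS x ψ, Or.inl (.alS h)⟩).toRegF
    · exact (unamb_stepF ⟨.exS x ψ, Or.inr (.exS h)⟩).toRegF

theorem backward (hK : AddLocallyFinite K) (S : NestedWord Δ → K) (h : NWDefinable SWRMSO S) :
    NWRegular S := by
  obtain ⟨φ, h1, -, h2⟩ := h
  exact (SWRMSO_regF hK φ h1).toNWRegular S h2

end
end NWA

set_option linter.unusedSectionVars false
namespace NWA

section Fwd
open Classical
variable {Δ : Type} {K : Type} [CommSemiring K]

/-- finite disjunction -/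
noncomputable def bigOr {α : Type} [Fintype α] (f : α → WMSO K Δ) : WMSO K Δ :=
  (Finset.univ.toList.map f).foldr .or (.const 0)

/-- finite conjunction -/
noncomputable def bigAnd {α : Type} [Fintype α] (f : α → WMSO K Δ) : WMSO K Δ :=
  (Finset.univ.toList.map f).foldr .and (.const 1)

theorem sem_bigOr {α : Type} [Fintype α] (f : α → WMSO K Δ) (nw : NestedWord Δ) (γ1 γ2) :
    (bigOr f).sem nw γ1 γ2 = ∑ a, (f a).sem nw γ1 γ2 := by
  rw [← Finset.sum_map_toList, bigOr]
  induction (Finset.univ : Finset α).toList with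
  | nil => simp [WMSO.sem]
  | cons a l ih => simp [WMSO.sem, ih]

theorem sem_bigAnd {α : Type} [Fintype α] (f : α → WMSO K Δ) (nw : NestedWord Δ) (γ1 γ2) :
    (bigAnd f).sem nw γ1 γ2 = ∏ a, (f a).sem nw γ1 γ2 := by
  rw [← Finset.prod_map_toList, bigAnd]
  induction (Finset.univ : Finset α).toList with
  | nil => simp [WMSO.sem]
  | cons a l ih => simp [WMSO.sem, ih]

/-- well-behaved formulas: weakly unambiguous and restricted with controlled free variables -/
structure Good (m : ℕ) (V : Finset ℕ) (φ : WMSO K Δ) : Prop where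
  wu : WUMSO φ
  sw : SWRMSO φ
  fF : φ.freeF ⊆ V
  fS : ∀ X ∈ φ.freeS, X < m

variable {m : ℕ} {V : Finset ℕ} {φ ψ : WMSO K Δ}

theorem Good.const (k : K) : Good m V (.const k : WMSO K Δ) :=
  ⟨.const k, trivial, by simp [WMSO.freeF], by simp [WMSO.freeS]⟩

theorem Good.and (h1 : Good m V φ) (h2 : Good m V ψ) : Good m V (.and φ ψ) :=
  ⟨.and h1.wu h2.wu, ⟨h1.sw, h2.sw⟩, Finset.union_subset h1.fF h2.fF, fun X hX =>
    (Finset.mem_union.1 hX).elim (h1.fS X) (h2.fS X)⟩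

theorem Good.or (h1 : Good m V φ) (h2 : Good m V ψ) : Good m V (.or φ ψ) :=
  ⟨.or h1.wu h2.wu, ⟨h1.sw, h2.sw⟩, Finset.union_subset h1.fF h2.fF, fun X hX =>
    (Finset.mem_union.1 hX).elim (h1.fS X) (h2.fS X)⟩

theorem Good.exF {x : ℕ} (h1 : Good m (insert x V) φ) : Good m V (.exF x φ) :=
  ⟨.exF h1.wu, h1.sw, fun y hy => by
    have h := Finset.mem_erase.1 hy
    exact (Finset.mem_insert.1 (h1.fF h.2)).resolve_left h.1, h1.fS⟩

theorem Good.alF {x : ℕ} (h1 : Good m (insert x V) φ) (h2 : SyntUnamb (.alF x φ)) :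
    Good m V (.alF x φ) :=
  ⟨.unamb h2, ⟨h1.wu, h1.sw⟩, fun y hy => by
    have h := Finset.mem_erase.1 hy
    exact (Finset.mem_insert.1 (h1.fF h.2)).resolve_left h.1, h1.fS⟩

theorem Good.lev {x y : ℕ} (hx : x ∈ V) (hy : y ∈ V) : Good m V (.lev x y : WMSO K Δ) :=
  ⟨.unamb ⟨_, .inl (.lev x y)⟩, trivial, by
    intro z hz; simp [WMSO.freeF] at hz; rcases hz with rfl | rfl <;> assumption,
    by simp [WMSO.freeS]⟩

theorem Good.nle {x y : ℕ} (hx : x ∈ V) (hy : y ∈ V) : Good m V (.nle x y : WMSO K Δ) :=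
  ⟨.unamb ⟨_, .inr (.lev x y)⟩, trivial, by
    intro z hz; simp [WMSO.freeF] at hz; rcases hz with rfl | rfl <;> assumption,
    by simp [WMSO.freeS]⟩

theorem Good.nuv {x y : ℕ} (hx : x ∈ V) (hy : y ∈ V) : Good m V (.nuv x y : WMSO K Δ) :=
  ⟨.unamb ⟨_, .inl (.nuv x y)⟩, trivial, by
    intro z hz; simp [WMSO.freeF] at hz; rcases hz with rfl | rfl <;> assumption,
    by simp [WMSO.freeS]⟩

theorem Good.nnu {x y : ℕ} (hx : x ∈ V) (hy : y ∈ V) : Good m V (.nnu x y : WMSO K Δ) :=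
  ⟨.unamb ⟨_, .inr (.nuv x y)⟩, trivial, by
    intro z hz; simp [WMSO.freeF] at hz; rcases hz with rfl | rfl <;> assumption,
    by simp [WMSO.freeS]⟩

theorem Good.lab {x : ℕ} (a : Δ) (hx : x ∈ V) : Good m V (.lab a x : WMSO K Δ) :=
  ⟨.unamb ⟨_, .inl (.lab a x)⟩, trivial, by simpa [WMSO.freeF] using hx,
    by simp [WMSO.freeS]⟩

theorem Good.mem {x X : ℕ} (hx : x ∈ V) (hX : X < m) : Good m V (.mem x X : WMSO K Δ) :=
  ⟨.unamb ⟨_, .inl (.mem x X)⟩, trivial, by simpa [WMSO.freeF] using hx,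
    by simpa [WMSO.freeS] using hX⟩

theorem Good.nmem {x X : ℕ} (hx : x ∈ V) (hX : X < m) : Good m V (.nmem x X : WMSO K Δ) :=
  ⟨.unamb ⟨_, .inr (.mem x X)⟩, trivial, by simpa [WMSO.freeF] using hx,
    by simpa [WMSO.freeS] using hX⟩

theorem Good.bigOr {α : Type} [Fintype α] {f : α → WMSO K Δ} (h : ∀ a, Good m V (f a)) :
    Good m V (bigOr f) := by
  unfold NWA.bigOr
  induction (Finset.univ : Finset α).toList with
  | nil => exact Good.const 0
  | cons a l ih => exact (h a).or ih

theorem Good.bigAnd {α : Type} [Fintype α] {f : α → WMSO K Δ} (h : ∀ a, Good m V (f a)) :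
    Good m V (bigAnd f) := by
  unfold NWA.bigAnd
  induction (Finset.univ : Finset α).toList with
  | nil => exact Good.const 1
  | cons a l ih => exact (h a).and ih

/-- block of existential set quantifiers for the variables `0, …, m-1` -/
def exSs : ℕ → WMSO K Δ → WMSO K Δ
  | 0, φ => φ
  | m + 1, φ => exSs m (.exS m φ)

theorem exSs_SW (h : SWRMSO φ) : SWRMSO (exSs m φ) := by
  induction m generalizing φ with
  | zero => exact h
  | succ m ih => exact ih (φ := .exS m φ) h

theorem exSs_freeF : (exSs m φ).freeF = φ.freeF := by
  induction m generalizing φ with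
  | zero => rfl
  | succ m ih => rw [exSs, ih, WMSO.freeF]

theorem exSs_freeS (h : ∀ X ∈ φ.freeS, X < m) : (exSs m φ).freeS = ∅ := by
  induction m generalizing φ with
  | zero =>
    refine Finset.eq_empty_of_forall_notMem fun X hX => ?_
    exact absurd (h X hX) (by omega)
  | succ m ih =>
    refine ih fun X hX => ?_
    have h' := Finset.mem_erase.1 (by simpa only [WMSO.freeS] using hX)
    have := h X h'.2
    have := h'.1
    omega

/-- overriding the first `m` set variables -/
def ovr (γ2 : ℕ → Finset ℕ) {m : ℕ} {P : Finset (Finset ℕ)} (f : Fin m → P) : ℕ → Finset ℕ :=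
  fun k => if h : k < m then (f ⟨k, h⟩ : Finset ℕ) else γ2 k

theorem sem_exSs (nw : NestedWord Δ) (γ1 γ2) :
    (exSs m φ).sem nw γ1 γ2 =
      ∑ f : Fin m → ((Finset.Icc 1 nw.len).powerset : Finset (Finset ℕ)),
        φ.sem nw γ1 (ovr γ2 f) := by
  induction m generalizing φ with
  | zero =>
    rw [Fintype.sum_unique]
    congr 1
  | succ m ih =>
    rw [exSs, ih]
    rw [← Equiv.sum_comp (Fin.snocEquiv (fun _ => ((Finset.Icc 1 nw.len).powerset :
      Finset (Finset ℕ)))), Fintype.sum_prod_type, Finset.sum_comm]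
    refine Finset.sum_congr rfl fun f _ => ?_
    rw [WMSO.sem, ← Finset.sum_coe_sort]
    refine Finset.sum_congr rfl fun T _ => ?_
    congr 1
    funext k
    simp only [ovr, Fin.snocEquiv, Equiv.coe_fn_mk]
    rcases lt_trichotomy k m with h | h | h
    · rw [Function.update_of_ne (by omega)]
      simp only [dif_pos (show k < m + 1 by omega)]
      simp [ovr, Fin.snoc, h]
    · subst h
      simp [Fin.snoc]
    · rw [Function.update_of_ne (by omega), dif_neg (by omega), ovr, dif_neg (by omega)]

end Fwd
end NWA

set_option linter.unusedSectionVars false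
namespace NWA

section Fwd2
open Classical
variable {K Δ : Type} [CommSemiring K]

theorem ind_true {p : Prop} (h : p) : ind K p = 1 := by simp [ind, h]
theorem ind_false {p : Prop} (h : ¬ p) : ind K p = 0 := by simp [ind, h]

theorem sum_ind_single {α : Type} (s : Finset α) (P : α → Prop) (g : α → K) (y : α)
    (hy : y ∈ s) (h : ∀ z ∈ s, P z ↔ z = y) : ∑ z ∈ s, ind K (P z) * g z = g y := by
  rw [Finset.sum_eq_single_of_mem y hy]
  · rw [ind_true ((h y hy).2 rfl), one_mul]
  · intro z hz hne
    rw [ind_false (fun hp => hne ((h z hz).1 hp)), zero_mul]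

theorem sum_ind_none {α : Type} (s : Finset α) (P : α → Prop) (g : α → K)
    (h : ∀ z ∈ s, ¬ P z) : ∑ z ∈ s, ind K (P z) * g z = 0 :=
  Finset.sum_eq_zero fun z hz => by rw [ind_false (h z hz), zero_mul]

/-- index of the set variable of a state -/
noncomputable def idx {Q : Type} [Fintype Q] (q : Q) : ℕ := (Fintype.equivFin Q q : ℕ)

theorem idx_lt {Q : Type} [Fintype Q] (q : Q) : idx q < Fintype.card Q := (Fintype.equivFin Q q).2

theorem idx_inj {Q : Type} [Fintype Q] : Function.Injective (idx : Q → ℕ) := fun _ _ h =>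
  (Fintype.equivFin Q).injective (Fin.ext h)

/-- position `j` carries exactly the state `p` -/
def stt {Q : Type} [Fintype Q] (γ2 : ℕ → Finset ℕ) (p : Q) (j : ℕ) : Prop :=
  ∀ p' : Q, j ∈ γ2 (idx p') ↔ p' = p

variable (K Δ) in
/-- formula for `stt` -/
noncomputable def stF {Q : Type} [Fintype Q] (x : ℕ) (p : Q) : WMSO K Δ :=
  bigAnd fun p' : Q => if p' = p then .mem x (idx p') else .nmem x (idx p')

theorem sem_stF {Q : Type} [Fintype Q] (x : ℕ) (p : Q) (nw : NestedWord Δ) (γ1 γ2) :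
    (stF K Δ x p).sem nw γ1 γ2 = ind K (stt γ2 p (γ1 x)) := by
  rw [stF, sem_bigAnd]
  have : ∀ p' : Q, WMSO.sem nw (if p' = p then .mem x (idx p') else .nmem x (idx p') : WMSO K Δ) γ1 γ2
      = ind K (γ1 x ∈ γ2 (idx p') ↔ p' = p) := by
    intro p'
    by_cases h : p' = p
    · simp only [h, if_true, WMSO.sem, ite_ind, iff_true]
    · simp only [h, if_false, WMSO.sem, ite_ind', iff_false]
  simp only [this, ind_prod]
  congr 1
  simp [stt]

theorem good_stF {Q : Type} [Fintype Q] {V : Finset ℕ} {x : ℕ} (hx : x ∈ V) (p : Q) :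
    Good (Fintype.card Q) V (stF K Δ x p) := by
  refine Good.bigAnd fun p' => ?_
  split_ifs
  · exact Good.mem hx (idx_lt _)
  · exact Good.nmem hx (idx_lt _)

variable (K Δ) in
/-- `0` is the first position -/
def firstF : WMSO K Δ := .alF 1 (.lev 0 1)
variable (K Δ) in
/-- `0` is the last position -/
def lastF : WMSO K Δ := .alF 1 (.lev 1 0)
variable (K Δ) in
/-- `v` is the successor of `u` -/
def succF (u v : ℕ) : WMSO K Δ :=
  .and (.nle v u) (.alF 2 (.or (.lev 2 u) (.and (.nle 2 u) (.lev v 2))))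

theorem plus_al (u v : ℕ) : PlusOf K (.alF 2 (.or (.lev 2 u) (.lev v 2)) : MSOF Δ)
    (.alF 2 (.or (.lev 2 u) (.and (.nle 2 u) (.lev v 2)))) :=
  .alF (.or (.lev _ _) (.lev _ _) (.lev _ _))

theorem plus_succ (u v : ℕ) : PlusOf K (.and (.not (.lev v u)) (.alF 2 (.or (.lev 2 u) (.lev v 2))) : MSOF Δ)
    (succF K Δ u v) :=
  .and (.not (.lev _ _)) (plus_al u v)

theorem good_first {m : ℕ} {V : Finset ℕ} (hx : 0 ∈ V) : Good m V (firstF K Δ) :=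
  Good.alF (Good.lev (by simp [hx]) (by simp)) ⟨_, .inl (.alF (.lev _ _))⟩

theorem good_last {m : ℕ} {V : Finset ℕ} (hx : 0 ∈ V) : Good m V (lastF K Δ) :=
  Good.alF (Good.lev (by simp) (by simp [hx])) ⟨_, .inl (.alF (.lev _ _))⟩

theorem good_succ {m : ℕ} {V : Finset ℕ} {u v : ℕ} (hu : u ∈ V) (hv : v ∈ V) :
    Good m V (succF K Δ u v) :=
  (Good.nle hv hu).and (Good.alF (.or (Good.lev (by simp) (by simp [hu]))
    ((Good.nle (by simp) (by simp [hu])).and (Good.lev (by simp [hv]) (by simp))))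
    ⟨_, .inl (plus_al u v)⟩)

theorem sem_first (nw : NestedWord Δ) (γ1 γ2) (h : γ1 0 ∈ Finset.Icc 1 nw.len) :
    (firstF K Δ).sem nw γ1 γ2 = ind K (γ1 0 = 1) := by
  rw [firstF, sem_plus nw (.alF (.lev 0 1))]
  congr 1
  simp only [holds, Function.update_self, ne_eq, zero_ne_one, not_false_eq_true,
    Function.update_of_ne, eq_iff_iff]
  have hh := Finset.mem_Icc.1 h
  constructor
  · intro H
    have := H 1 (Finset.mem_Icc.2 ⟨le_refl _, by omega⟩)
    omega
  · intro H i hi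
    have := Finset.mem_Icc.1 hi
    omega

theorem sem_last (nw : NestedWord Δ) (γ1 γ2) (h : γ1 0 ∈ Finset.Icc 1 nw.len) :
    (lastF K Δ).sem nw γ1 γ2 = ind K (γ1 0 = nw.len) := by
  rw [lastF, sem_plus nw (.alF (.lev 1 0))]
  congr 1
  simp only [holds, Function.update_self, ne_eq, zero_ne_one, not_false_eq_true,
    Function.update_of_ne, eq_iff_iff]
  have hh := Finset.mem_Icc.1 h
  constructor
  · intro H
    have := H nw.len (Finset.mem_Icc.2 ⟨by omega, le_refl _⟩)
    omega
  · intro H i hi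
    have := Finset.mem_Icc.1 hi
    omega

theorem sem_succ (nw : NestedWord Δ) (γ1 γ2) (u v : ℕ) (hu2 : u ≠ 2) (hv2 : v ≠ 2)
    (hu : γ1 u ∈ Finset.Icc 1 nw.len) (hv : γ1 v ∈ Finset.Icc 1 nw.len) :
    (succF K Δ u v).sem nw γ1 γ2 = ind K (γ1 v = γ1 u + 1) := by
  rw [sem_plus nw (plus_succ u v)]
  congr 1
  simp only [holds, Function.update_self, Function.update_of_ne hu2, Function.update_of_ne hv2,
    eq_iff_iff]
  have hh := Finset.mem_Icc.1 hu
  have hh' := Finset.mem_Icc.1 hv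
  constructor
  · rintro ⟨H0, H⟩
    have := H (γ1 u + 1) (Finset.mem_Icc.2 ⟨by omega, by omega⟩)
    omega
  · intro H
    refine ⟨by omega, fun i hi => by omega⟩

variable (A : WNWA K Δ) [Fintype Δ]

/-- weight at the start -/
def startF (p : A.Q) : WMSO K Δ :=
  .or (.and (firstF K Δ) (.const (A.ι p))) (.exF 1 (succF K Δ 1 0))

/-- consistency with the next state and weight at the end -/
noncomputable def nextF (q : A.Q) : WMSO K Δ :=
  .or (.and (lastF K Δ) (.const (A.κ q))) (.exF 1 (.and (succF K Δ 0 1) (stF K Δ 1 q)))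

/-- transition weight -/
noncomputable def transF (p : A.Q) (a : Δ) (q : A.Q) : WMSO K Δ :=
  .or (.exF 1 (.and (.nuv 0 1) (.const (A.δcall p a q))))
    (.and (.alF 1 (.nnu 0 1))
      (.or (.exF 1 (.and (.nuv 1 0)
          (bigOr fun p' : A.Q => .and (stF K Δ 1 p') (.const (A.δret p p' a q)))))
        (.and (.alF 1 (.nnu 1 0)) (.const (A.δint p a q)))))

/-- local weight formula -/
noncomputable def WF : WMSO K Δ :=
  bigOr fun p : A.Q => .and (stF K Δ 0 p) (bigOr fun q : A.Q => bigOr fun a : Δ =>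
    .and (.lab a 0) (.and (startF A p) (.and (nextF A q) (transF A p a q))))

theorem good_WF : Good (Fintype.card A.Q) {0} (WF A) := by
  refine Good.bigOr fun p => (good_stF (by simp) p).and (Good.bigOr fun q => Good.bigOr fun a => ?_)
  refine (Good.lab a (by simp)).and (Good.and ?_ (Good.and ?_ ?_))
  · exact ((good_first (by simp)).and (Good.const _)).or (Good.exF (good_succ (by simp) (by simp)))
  · exact ((good_last (by simp)).and (Good.const _)).or (Good.exF ((good_succ (by simp) (by simp)).and
      (good_stF (by simp) _)))
  · refine (Good.exF ((Good.nuv (by simp) (by simp)).and (Good.const _))).or (Good.and ?_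
      (Good.or (Good.exF ((Good.nuv (by simp) (by simp)).and (Good.bigOr fun p' =>
        (good_stF (by simp) _).and (Good.const _)))) (Good.and ?_ (Good.const _))))
    · exact Good.alF (Good.nnu (by simp) (by simp)) ⟨.exF 1 (.nuv 0 1), .inr (.exF (.nuv _ _))⟩
    · exact Good.alF (Good.nnu (by simp) (by simp)) ⟨.exF 1 (.nuv 1 0), .inr (.exF (.nuv _ _))⟩

/-- the sentence of an automaton -/
noncomputable def autF : WMSO K Δ := exSs (Fintype.card A.Q) (.alF 0 (WF A))

theorem autF_sw : SWRMSO (autF A) := exSs_SW ⟨(good_WF A).wu, (good_WF A).sw⟩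

theorem autF_sentence : (autF A).Sentence := by
  refine ⟨?_, exSs_freeS (good_WF A).fS⟩
  rw [autF, exSs_freeF, WMSO.freeF]
  have := (good_WF A).fF
  refine Finset.eq_empty_of_forall_notMem fun x hx => ?_
  have h := Finset.mem_erase.1 hx
  exact h.1 (Finset.mem_singleton.1 (this h.2))

/-- local weight at `j` for source states `R` and target state `q` -/
noncomputable def tw (nw : NestedWord Δ) (R : ℕ → A.Q) (j : ℕ) (q : A.Q) : K :=
  if nw.IsCall j then A.δcall (R j) (nw.letter j) q
  else if h : nw.IsReturn j then A.δret (R j) (R h.choose) (nw.letter j) q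
  else A.δint (R j) (nw.letter j) q

variable {A} {nw : NestedWord Δ} {γ1 : ℕ → ℕ} {γ2 : ℕ → Finset ℕ} {R : ℕ → A.Q}

theorem sem_start (h : γ1 0 ∈ Finset.Icc 1 nw.len) (p : A.Q) :
    (startF A p).sem nw γ1 γ2 = if γ1 0 = 1 then A.ι p else 1 := by
  have hh := Finset.mem_Icc.1 h
  simp only [startF, WMSO.sem, sem_first nw γ1 γ2 h]
  have e : ∀ y ∈ Finset.Icc 1 nw.len, (succF K Δ 1 0).sem nw (Function.update γ1 1 y) γ2 =
      ind K (γ1 0 = y + 1) * 1 := by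
    intro y hy
    rw [sem_succ _ _ _ _ _ (by omega) (by omega) (by simpa using hy) (by simpa using h)]
    simp
  rw [Finset.sum_congr rfl e]
  split_ifs with h1
  · rw [sum_ind_none, ind_true h1, one_mul, add_zero]
    intro z hz
    have := Finset.mem_Icc.1 hz
    omega
  · rw [sum_ind_single (y := γ1 0 - 1), ind_false h1, zero_mul, zero_add]
    · rw [Finset.mem_Icc]; omega
    · intro z hz; omega

theorem sem_next (h : γ1 0 ∈ Finset.Icc 1 nw.len)
    (hR : ∀ j ∈ Finset.Icc 1 nw.len, ∀ p, stt γ2 p j ↔ p = R j) (q : A.Q) :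
    (nextF A q).sem nw γ1 γ2 = if γ1 0 = nw.len then A.κ q else ind K (q = R (γ1 0 + 1)) := by
  have hh := Finset.mem_Icc.1 h
  simp only [nextF, WMSO.sem, sem_last nw γ1 γ2 h]
  have e : ∀ y ∈ Finset.Icc 1 nw.len, (succF K Δ 0 1).sem nw (Function.update γ1 1 y) γ2 *
      (stF K Δ 1 q).sem nw (Function.update γ1 1 y) γ2 =
      ind K (y = γ1 0 + 1) * ind K (q = R y) := by
    intro y hy
    rw [sem_succ _ _ _ _ _ (by omega) (by omega) (by simpa using h) (by simpa using hy), sem_stF]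
    simp [hR y hy]
  rw [Finset.sum_congr rfl e]
  split_ifs with h1
  · rw [sum_ind_none, ind_true h1, one_mul, add_zero]
    intro z hz
    have := Finset.mem_Icc.1 hz
    omega
  · rw [sum_ind_single (y := γ1 0 + 1), ind_false h1, zero_mul, zero_add]
    · rw [Finset.mem_Icc]; omega
    · intro z hz; omega

theorem sem_trans (h : γ1 0 ∈ Finset.Icc 1 nw.len)
    (hR : ∀ j ∈ Finset.Icc 1 nw.len, ∀ p, stt γ2 p j ↔ p = R j) (q : A.Q) :
    (transF A (R (γ1 0)) (nw.letter (γ1 0)) q).sem nw γ1 γ2 = tw A nw R (γ1 0) q := by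
  have hrel : ∀ {i j}, nw.rel i j → i ∈ Finset.Icc 1 nw.len ∧ j ∈ Finset.Icc 1 nw.len := by
    intro i j hij
    have := nw.isNest.1 i j hij
    simp only [Finset.mem_Icc, NestedWord.len]
    omega
  simp only [transF, WMSO.sem, sem_bigOr, sem_stF, ite_ind, ite_ind', ind_prod,
    Function.update_self, ne_eq, zero_ne_one, not_false_eq_true, Function.update_of_ne]
  have e : ∀ y ∈ Finset.Icc 1 nw.len, ind K (nw.rel y (γ1 0)) *
      ∑ p', ind K (stt γ2 p' y) * A.δret (R (γ1 0)) p' (nw.letter (γ1 0)) q =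
      ind K (nw.rel y (γ1 0)) * A.δret (R (γ1 0)) (R y) (nw.letter (γ1 0)) q := by
    intro y hy
    rw [sum_ind_single (y := R y) _ _ _ (Finset.mem_univ _) (fun z _ => hR y hy z)]
  rw [Finset.sum_congr rfl e]
  unfold tw
  by_cases hc : nw.IsCall (γ1 0)
  · rw [if_pos hc]
    obtain ⟨y, hy⟩ := hc
    rw [sum_ind_single (y := y) _ _ _ (hrel hy).2 (fun z _ => ⟨fun hz => nw.isNest.2.1 _ _ _ hz hy,
      fun hz => hz ▸ hy⟩), ind_false, zero_mul, add_zero]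
    exact fun H => H y (hrel hy).2 hy
  · rw [if_neg hc, sum_ind_none _ _ _ (fun z _ hz => hc ⟨z, hz⟩),
      ind_true (fun z _ hz => hc ⟨z, hz⟩), one_mul, zero_add]
    by_cases hr : nw.IsReturn (γ1 0)
    · rw [dif_pos hr]
      have hy := hr.choose_spec
      rw [sum_ind_single (y := hr.choose) _ _ _ (hrel hy).1
        (fun z _ => ⟨fun hz => nw.isNest.2.2.1 _ _ _ hz hy, fun hz => hz ▸ hy⟩),
        ind_false, zero_mul, add_zero]
      exact fun H => H _ (hrel hy).1 hy
    · rw [dif_neg hr, sum_ind_none _ _ _ (fun z _ hz => hr ⟨z, hz⟩),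
        ind_true (fun z _ hz => hr ⟨z, hz⟩), one_mul, zero_add]

theorem sem_WF (h : γ1 0 ∈ Finset.Icc 1 nw.len)
    (hR : ∀ j ∈ Finset.Icc 1 nw.len, ∀ p, stt γ2 p j ↔ p = R j) :
    (WF A).sem nw γ1 γ2 = (if γ1 0 = 1 then A.ι (R (γ1 0)) else 1) *
      if γ1 0 = nw.len then ∑ q, A.κ q * tw A nw R (γ1 0) q
      else tw A nw R (γ1 0) (R (γ1 0 + 1)) := by
  simp only [WF, sem_bigOr, WMSO.sem, sem_stF]
  rw [sum_ind_single (y := R (γ1 0)) _ _ _ (Finset.mem_univ _) (fun z _ => hR _ h z)]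
  have e : ∀ q : A.Q, ∑ a : Δ, (if nw.letter (γ1 0) = a then (1 : K) else 0) *
      ((startF A (R (γ1 0))).sem nw γ1 γ2 * ((nextF A q).sem nw γ1 γ2 *
        (transF A (R (γ1 0)) a q).sem nw γ1 γ2)) =
      (if γ1 0 = 1 then A.ι (R (γ1 0)) else 1) *
       ((if γ1 0 = nw.len then A.κ q else ind K (q = R (γ1 0 + 1))) * tw A nw R (γ1 0) q) := by
    intro q
    simp only [ite_ind]
    rw [sum_ind_single (y := nw.letter (γ1 0)) _ _ _ (Finset.mem_univ _)
      (fun z _ => eq_comm), sem_start h, sem_next h hR, sem_trans h hR]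
  rw [Finset.sum_congr rfl (fun q _ => e q), ← Finset.mul_sum]
  congr 1
  split_ifs with h1
  · rfl
  · exact sum_ind_single _ _ _ _ (Finset.mem_univ _) (fun z _ => Iff.rfl)

end Fwd2
end NWA

set_option linter.unusedSectionVars false
namespace NWA

section Fwd3
open Classical
variable {K Δ : Type} [CommSemiring K] [Fintype Δ]

/-- source state at a position -/
def srcS {Q : Type} (nw : NestedWord Δ) (r : Fin nw.len → Q) (j : ℕ) : Q :=
  r ⟨min (j - 1) (nw.len - 1), by have := len_pos nw; omega⟩

theorem srcS_eq {Q : Type} (nw : NestedWord Δ) (r : Fin nw.len → Q) (j : ℕ) (h : j - 1 < nw.len) :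
    srcS nw r j = r ⟨j - 1, h⟩ := by
  unfold srcS
  congr 1
  apply Fin.ext
  show min (j - 1) (nw.len - 1) = j - 1
  omega

/-- family of sets encoding a state sequence -/
noncomputable def fam {Q : Type} [Fintype Q] (nw : NestedWord Δ) (r : Fin nw.len → Q) :
    Fin (Fintype.card Q) → ((Finset.Icc 1 nw.len).powerset : Finset (Finset ℕ)) := fun k =>
  ⟨(Finset.Icc 1 nw.len).filter (fun j => srcS nw r j = (Fintype.equivFin Q).symm k),
    Finset.mem_powerset.2 (Finset.filter_subset _ _)⟩

theorem fam_inj {Q : Type} [Fintype Q] (nw : NestedWord Δ) :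
    Function.Injective (fam nw : (Fin nw.len → Q) → _) := by
  intro r r' h
  funext i
  have h1 : (i : ℕ) + 1 ∈ ((fam nw r (Fintype.equivFin Q (r i)) : _) : Finset ℕ) := by
    simp only [fam, Finset.mem_filter, Finset.mem_Icc, Equiv.symm_apply_apply]
    exact ⟨⟨by omega, by omega⟩, srcS_eq nw r (i + 1) (by simp)⟩
  rw [h] at h1
  simp only [fam, Finset.mem_filter, Finset.mem_Icc, Equiv.symm_apply_apply] at h1
  rw [← h1.2]
  exact srcS_eq nw r' (i + 1) (by simp)

theorem fam_stt {Q : Type} [Fintype Q] (nw : NestedWord Δ) (r : Fin nw.len → Q) (γ2) :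
    ∀ j ∈ Finset.Icc 1 nw.len, ∀ p, stt (ovr γ2 (fam nw r)) p j ↔ p = srcS nw r j := by
  intro j hj p
  have e : ∀ p' : Q, j ∈ ovr γ2 (fam nw r) (idx p') ↔ srcS nw r j = p' := by
    intro p'
    rw [ovr, dif_pos (idx_lt p')]
    have : (⟨idx p', idx_lt p'⟩ : Fin _) = Fintype.equivFin Q p' := rfl
    rw [this]
    simp only [fam, Finset.mem_filter, Equiv.symm_apply_apply, hj, true_and]
  simp only [stt, e]
  constructor
  · intro h
    exact ((h (srcS nw r j)).1 rfl).symm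
  · rintro rfl p'
    exact eq_comm

theorem fam_surj {Q : Type} [Fintype Q] (nw : NestedWord Δ) (γ2)
    (f : Fin (Fintype.card Q) → ((Finset.Icc 1 nw.len).powerset : Finset (Finset ℕ)))
    (h : ∀ j ∈ Finset.Icc 1 nw.len, ∃ p : Q, stt (ovr γ2 f) p j) : ∃ r, fam nw r = f := by
  choose g hg using h
  refine ⟨fun i => g (i + 1) (Finset.mem_Icc.2 ⟨by omega, by omega⟩), ?_⟩
  funext k
  apply Subtype.ext
  ext j
  have hsub := Finset.mem_powerset.1 (f k).2
  by_cases hj : j ∈ Finset.Icc 1 nw.len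
  · have hh := Finset.mem_Icc.1 hj
    simp only [fam, Finset.mem_filter, hj, true_and]
    rw [srcS_eq _ _ _ (by omega)]
    have := hg j hj ((Fintype.equivFin Q).symm k)
    have e2 : (⟨idx ((Fintype.equivFin Q).symm k), idx_lt _⟩ : Fin (Fintype.card Q)) = k := by
      apply Fin.ext
      simp [idx]
    rw [ovr, dif_pos (idx_lt _), e2] at this
    rw [this]
    have e3 : g (j - 1 + 1) (by rw [Nat.sub_add_cancel hh.1]; exact hj) = g j hj := by
      congr 1; omega
    simp only [e3]
    exact eq_comm
  · constructor
    · intro h'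
      simp only [fam, Finset.mem_filter] at h'
      exact absurd h'.1 hj
    · intro h'
      exact absurd (hsub h') hj

theorem sem_WF_zero (A : WNWA K Δ) (nw : NestedWord Δ) (γ1 γ2)
    (h : ¬ ∃ p : A.Q, stt γ2 p (γ1 0)) : (WF A).sem nw γ1 γ2 = 0 := by
  simp only [WF, sem_bigOr, WMSO.sem, sem_stF]
  exact sum_ind_none _ _ _ fun p _ hp => h ⟨p, hp⟩

theorem clamp_snoc {Q : Type} (nw : NestedWord Δ) (r : Fin nw.len → Q) (q : Q) (k : ℕ) :
    clampFun (Fin.snoc (α := fun _ => Q) r q) k = if k < nw.len then srcS nw r (k + 1) else q := by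
  unfold clampFun
  split_ifs with h
  · rw [srcS_eq _ _ _ (by simpa using h)]
    have : min k nw.len = k := by omega
    simp [Fin.snoc, h]
    congr 1
    exact Fin.ext this
  · have : min k nw.len = nw.len := by omega
    simp [Fin.snoc, h]

theorem posWeight_tw (A : WNWA K Δ) (nw : NestedWord Δ) (r : Fin nw.len → A.Q) (q : A.Q) (j : ℕ)
    (hj : j ∈ Finset.Icc 1 nw.len) :
    A.posWeight nw (clampFun (Fin.snoc (α := fun _ => A.Q) r q)) j =
      if j = nw.len then tw A nw (srcS nw r) j q
      else tw A nw (srcS nw r) j (srcS nw r (j + 1)) := by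
  have hh := Finset.mem_Icc.1 hj
  have e1 : clampFun (Fin.snoc (α := fun _ => A.Q) r q) (j - 1) = srcS nw r j := by
    rw [clamp_snoc, if_pos (by omega), Nat.sub_add_cancel hh.1]
  have e2 : clampFun (Fin.snoc (α := fun _ => A.Q) r q) j =
      if j = nw.len then q else srcS nw r (j + 1) := by
    rw [clamp_snoc]
    split_ifs <;> first | rfl | omega
  have e3 : ∀ h : nw.IsReturn j, clampFun (Fin.snoc (α := fun _ => A.Q) r q) (h.choose - 1) =
      srcS nw r h.choose := by
    intro h
    have := nw.isNest.1 _ _ h.choose_spec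
    have : h.choose < j := this.2.1
    rw [clamp_snoc, if_pos (by omega), Nat.sub_add_cancel (by omega)]
  unfold WNWA.posWeight tw
  rw [e1, e2]
  by_cases hc : nw.IsCall j
  · simp only [if_pos hc]
    split_ifs <;> rfl
  · simp only [if_neg hc]
    by_cases hr : nw.IsReturn j
    · simp only [dif_pos hr, e3]
      split_ifs <;> rfl
    · simp only [dif_neg hr]
      split_ifs <;> rfl

theorem autF_sem (A : WNWA K Δ) (nw : NestedWord Δ) (γ1 γ2) :
    (autF A).sem nw γ1 γ2 = A.behavior nw := by
  have hn := len_pos nw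
  rw [autF, sem_exSs, WNWA.behavior]
  rw [← Equiv.sum_comp (Fin.snocEquiv (fun _ => A.Q)), Fintype.sum_prod_type, Finset.sum_comm]
  symm
  refine Finset.sum_of_injOn (fam nw) (fam_inj nw).injOn (fun _ _ => Finset.mem_coe.2 (Finset.mem_univ _)) ?_ ?_
  · intro f _ hf
    by_contra hne
    apply hf
    have : ∀ j ∈ Finset.Icc 1 nw.len, ∃ p : A.Q, stt (ovr γ2 f) p j := by
      intro j hj
      by_contra hno
      apply hne
      rw [WMSO.sem]
      refine Finset.prod_eq_zero hj (sem_WF_zero _ _ _ _ ?_)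
      simpa using hno
    obtain ⟨r, hr⟩ := fam_surj nw γ2 f this
    exact ⟨r, Finset.mem_coe.2 (Finset.mem_univ _), hr⟩
  · intro r _
    rw [WMSO.sem]
    have hW : ∀ j ∈ Finset.Icc 1 nw.len,
        (WF A).sem nw (Function.update γ1 0 j) (ovr γ2 (fam nw r)) =
        (if j = 1 then A.ι (srcS nw r j) else 1) *
        if j = nw.len then ∑ q, A.κ q * tw A nw (srcS nw r) j q
        else tw A nw (srcS nw r) j (srcS nw r (j + 1)) := by
      intro j hj
      rw [sem_WF (by simpa using hj) (fam_stt nw r γ2)]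
      simp only [Function.update_self]
    rw [Finset.prod_congr rfl hW, Finset.prod_mul_distrib]
    have h1 : ∏ j ∈ Finset.Icc 1 nw.len, (if j = 1 then A.ι (srcS nw r j) else 1) =
        A.ι (srcS nw r 1) := by
      rw [Finset.prod_eq_single_of_mem 1 (Finset.mem_Icc.2 ⟨le_refl _, hn⟩)]
      · simp
      · intro j _ hj; simp [hj]
    have hmem : nw.len ∈ Finset.Icc 1 nw.len := Finset.mem_Icc.2 ⟨hn, le_refl _⟩
    rw [h1, ← Finset.mul_prod_erase _ _ hmem, if_pos rfl, Finset.sum_mul, Finset.mul_sum]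
    refine Finset.sum_congr rfl fun q _ => ?_
    have e0 : (Fin.snocEquiv (fun _ => A.Q)) (q, r) = Fin.snoc (α := fun _ => A.Q) r q := rfl
    rw [e0]
    have e1 : Fin.snoc (α := fun _ => A.Q) r q 0 = srcS nw r 1 := by
      rw [srcS_eq _ _ _ (by omega)]
      simp only [Fin.snoc]
      rw [dif_pos (show ((0 : Fin (nw.len + 1)) : ℕ) < nw.len by simp; omega)]
      rfl
    rw [e1, Fin.snoc_last, WNWA.runWeight, ← Finset.mul_prod_erase _ _ hmem,
      posWeight_tw A nw r q _ hmem, if_pos rfl]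
    have e2 : ∏ j ∈ (Finset.Icc 1 nw.len).erase nw.len,
        A.posWeight nw (clampFun (Fin.snoc (α := fun _ => A.Q) r q)) j =
        ∏ j ∈ (Finset.Icc 1 nw.len).erase nw.len,
        (if j = nw.len then ∑ q, A.κ q * tw A nw (srcS nw r) j q
        else tw A nw (srcS nw r) j (srcS nw r (j + 1))) := by
      refine Finset.prod_congr rfl fun j hj => ?_
      have := Finset.mem_erase.1 hj
      rw [posWeight_tw A nw r q _ this.2, if_neg this.1, if_neg this.1]
    rw [e2]
    ring

theorem forward (S : NestedWord Δ → K) (h : NWRegular S) : NWDefinable SWRMSO S := by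
  obtain ⟨A, hA⟩ := h
  exact ⟨autF A, autF_sw A, autF_sentence A, fun nw γ1 γ2 => (autF_sem A nw γ1 γ2).trans (hA nw)⟩

end Fwd3
end NWA

/-- **Theorem (Mathissen).** Over an additively locally finite commutative semiring,
a nested word series is regular iff it is `swRMSO(K)`-definable. -/
theorem regular_iff_swRMSO_definable_of_addLocallyFinite
    (K Δ : Type) [CommSemiring K] [Fintype Δ] (h01 : (0 : K) ≠ 1)
    (hK : AddLocallyFinite K) (S : NestedWord Δ → K) :
    NWRegular S ↔ NWDefinable SWRMSO S := by
  exact ⟨NWA.forward S, NWA.backward hK S⟩
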